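/- arXiv:1403.6399 — 2 statements merged into one kernel-verified Lean document; each statement's English description precedes it below -/
import Mathlib

section
/- Suppose K with defining polynomials g₁,…,g_l satisfies Putinar's property. Let L : ℝ[x₁,…,xₙ] → ℝ be a linear functional such that L(p²) ≥ 0 and L(g_j p²) ≥ 0 for every polynomial p ∈ ℝ[x₁,…,xₙ] and every j = 1,…,l. Then there exists a finite Borel measure μ on ℝⁿ whose support is contained in K such that L(f) = ∫ f dμ for every polynomial f ∈ ℝ[x₁,…,xₙ]. -/
open MeasureTheory MvPolynomial

/-- `K = {x : gⱼ(x) ≥ 0, j = 1,…,l}`, with the defining polynomials `g`, satisfies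
Putinar's property if there are SOS polynomials `σ₀, σ₁, …, σ_l` such that
`{x : σ₀(x) + Σⱼ σⱼ(x) gⱼ(x) ≥ 0}` is compact. -/
def PutinarProperty {n l : ℕ} (g : Fin l → MvPolynomial (Fin n) ℝ) : Prop :=
  ∃ σ₀ : MvPolynomial (Fin n) ℝ, ∃ σ : Fin l → MvPolynomial (Fin n) ℝ,
    IsSumSq σ₀ ∧ (∀ j, IsSumSq (σ j)) ∧
    IsCompact {x : Fin n → ℝ | 0 ≤ eval x (σ₀ + ∑ j, σ j * g j)}

/-- The support of a Borel measure `μ` on `ℝⁿ`: the smallest closed set whose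
complement has `μ`-measure zero. -/
def measureSupport {n : ℕ} (μ : Measure (Fin n → ℝ)) : Set (Fin n → ℝ) :=
  ⋂₀ {C : Set (Fin n → ℝ) | IsClosed C ∧ μ Cᶜ = 0}

/-!
Write `u = σ₀ + ∑ σⱼ gⱼ`, so that `S = {u ≥ 0}` is compact, and let `T` be the preordering
generated by `u`. Expanding shows `L ≥ 0` on `T`.

Positivstellensatz: if `f > 0` on `S` then `f t = 1 + s` for some `s, t ∈ T`. Otherwise `-1` is not
in the preordering generated by `u` and `-f`, which then extends to an ordering of the polynomial
ring; a real closed field extending the ordered residue field contains a point with `u ≥ 0` and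
`f ≤ 0`, and sign conditions on finitely many polynomials transfer from it down to `ℝ`. The transfer
is an induction on the number of variables: by induction all coordinates but the first can be moved
to an ultrapower of `ℝ` without changing the sign of any polynomial, the first coordinate follows
by the one-variable case (order the finitely many roots), and a generic index of the ultrapower
gives the real point.

Archimedean property (Wörmann): apply this to `f = N - ∑ Xᵢ²`, which is positive on the bounded set
`S` for large `N`. The preordering generated by `T` and `f` is archimedean, so it contains `m - s`
for some real `m`; multiplying by `1 + s` moves this into `T`, so `s`, and then `∑ Xᵢ²`, is bounded
with respect to `T`. Once `T` is archimedean, the identity `f t = 1 + s` lets one decrease `r` in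
`r + f ∈ T` by steps of a fixed size down to `0`; so `T` contains every polynomial positive on `S`.

Hence `L` is nonnegative on polynomials that are nonnegative on `S`, and extends to a positive
functional on `C(S, ℝ)`, that is, to a measure `ν`. Testing `∫ gⱼ φ² dν ≥ 0`, which holds for all
continuous `φ` by density of polynomials, on the square root of the negative part of `gⱼ` shows
that `gⱼ ≥ 0` almost everywhere.
-/

/-- The intermediate value property for polynomials over an ordered field. It characterises real
closed fields, and is how real closedness is encoded here. -/
def HasPolynomialIVT (F : Type*) [Field F] [LinearOrder F] : Prop :=
  ∀ ⦃p : Polynomial F⦄ ⦃a b : F⦄, a < b → p.eval a < 0 → 0 < p.eval b →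
    ∃ c ∈ Set.Ioo a b, p.IsRoot c

theorem hasPolynomialIVT_real : HasPolynomialIVT ℝ := fun p _ _ hab ha hb ↦
  intermediate_value_Ioo hab.le p.continuousOn ⟨ha, hb⟩

namespace HasPolynomialIVT

variable {F : Type*} [Field F] [LinearOrder F] [IsStrictOrderedRing F] {p : Polynomial F} {a b : F}

theorem exists_eval_eq (hF : HasPolynomialIVT F) {v : F} (hab : a < b) (ha : p.eval a < v)
    (hb : v < p.eval b) : ∃ c ∈ Set.Ioo a b, p.eval c = v := by
  obtain ⟨c, hc, hroot⟩ := hF (p := p - Polynomial.C v) hab (by simpa using ha) (by simpa using hb)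
  exact ⟨c, hc, by simpa [sub_eq_zero] using hroot⟩

theorem exists_eval_eq_of_gt (hF : HasPolynomialIVT F) {v : F} (hab : a < b) (ha : v < p.eval a)
    (hb : p.eval b < v) : ∃ c ∈ Set.Ioo a b, p.eval c = v := by
  obtain ⟨c, hc, hpc⟩ := hF.exists_eval_eq (p := -p) (v := -v) hab (by simpa using ha)
    (by simpa using hb)
  exact ⟨c, hc, by simpa using hpc⟩

theorem eval_pos_of_forall_not_isRoot (hF : HasPolynomialIVT F)
    (hroot : ∀ c ∈ Set.uIcc a b, ¬ p.IsRoot c) (ha : 0 < p.eval a) : 0 < p.eval b := by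
  by_contra! hb
  have hb' : p.eval b < 0 := hb.lt_of_ne (hroot b Set.right_mem_uIcc)
  rcases lt_trichotomy a b with hab | rfl | hab
  · obtain ⟨c, hc, hpc⟩ := hF.exists_eval_eq_of_gt hab ha hb'
    exact hroot c (Set.Icc_subset_uIcc (Set.Ioo_subset_Icc_self hc)) hpc
  · exact ha.not_gt hb'
  · obtain ⟨c, hc, hpc⟩ := hF hab hb' ha
    exact hroot c (Set.Icc_subset_uIcc' (Set.Ioo_subset_Icc_self hc)) hpc

theorem sign_eval_eq_of_forall_not_isRoot (hF : HasPolynomialIVT F)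
    (hroot : ∀ c ∈ Set.uIcc a b, ¬ p.IsRoot c) :
    SignType.sign (p.eval a) = SignType.sign (p.eval b) := by
  rcases lt_or_gt_of_ne (hroot a Set.left_mem_uIcc) with ha | ha
  · have hb : 0 < (-p).eval b :=
      hF.eval_pos_of_forall_not_isRoot (by simpa using hroot) (by simpa using ha)
    rw [sign_neg ha, sign_neg (by simpa using hb)]
  · rw [sign_pos ha, sign_pos (hF.eval_pos_of_forall_not_isRoot hroot ha)]

theorem isSquare_of_pos (hF : HasPolynomialIVT F) {c : F} (hc : 0 < c) : IsSquare c := by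
  obtain ⟨r, -, hr⟩ := hF (p := Polynomial.X ^ 2 - Polynomial.C c) (a := 0) (b := c + 1)
    (by positivity) (by simpa using hc) (by simp; nlinarith)
  exact ⟨r, by simpa [sub_eq_zero, eq_comm, sq] using hr⟩

theorem strictMono_ringHom (hF : HasPolynomialIVT F) {E : Type*} [Field E] [LinearOrder E]
    [IsStrictOrderedRing E] (i : F →+* E) : StrictMono i := by
  refine (strictMono_iff_map_pos i).2 fun c hc ↦ ?_
  obtain ⟨r, rfl⟩ := hF.isSquare_of_pos hc
  rw [map_mul]
  exact mul_self_pos.2 ((map_ne_zero i).2 (left_ne_zero_of_mul hc.ne'))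

theorem eval_lt_eval_of_derivative_pos_Icc (hF : HasPolynomialIVT F) (hab : a < b)
    (hp : ∀ c ∈ Set.Icc a b, 0 < p.derivative.eval c) : p.eval a < p.eval b := by
  classical
  obtain ⟨q, hq⟩ : Polynomial.X - Polynomial.C a ∣ p - Polynomial.C (p.eval a) :=
    Polynomial.X_sub_C_dvd_sub_C_eval
  have hpq : p = (Polynomial.X - Polynomial.C a) * q + Polynomial.C (p.eval a) := by
    rw [← hq, sub_add_cancel]
  have hqa : q.eval a = p.derivative.eval a := by rw [hpq]; simp
  suffices hqb : 0 < q.eval b by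
    have : p.eval b = (b - a) * q.eval b + p.eval a := by conv_lhs => rw [hpq]; simp
    nlinarith [sub_pos.2 hab]
  refine hF.eval_pos_of_forall_not_isRoot (a := a) ?_ (hqa ▸ hp a ⟨le_rfl, hab.le⟩)
  rw [Set.uIcc_of_le hab.le]
  by_contra! hroot
  -- At the first root `d` of `q` the quotient `g = q / (X - d)` satisfies `g(a) < 0 < g(d)`.
  have hq0 : q ≠ 0 := by rintro rfl; exact (hp a ⟨le_rfl, hab.le⟩).ne (by simp [← hqa])
  obtain ⟨d, hd, hmin⟩ := (q.roots.toFinset.filter (· ∈ Set.Icc a b)).exists_minimal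
    (by obtain ⟨c, hc, hqc⟩ := hroot; exact ⟨c, by simpa [hq0, hc.1, hc.2] using hqc⟩)
  simp only [Finset.mem_filter, Multiset.mem_toFinset, Polynomial.mem_roots hq0] at hd hmin
  obtain ⟨g, rfl⟩ := Polynomial.dvd_iff_isRoot.2 hd.1
  have hda : 0 < (a - d) * g.eval a := by
    simpa [← hqa] using hp a ⟨le_rfl, hab.le⟩
  have hdd : 0 < (d - a) * g.eval d := by
    have := hp d hd.2
    rw [hpq] at this
    simpa using this
  have had : a < d := hd.2.1.lt_of_ne (by rintro rfl; simp at hda)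
  obtain ⟨c, hc, hgc⟩ := hF had (by nlinarith) (pos_of_mul_pos_right hdd (sub_nonneg.2 had.le))
  exact hc.2.not_ge (hmin ⟨Polynomial.root_mul_left_of_isRoot _ hgc, hc.1.le, hc.2.le.trans hd.2.2⟩
    hc.2.le)

theorem strictMonoOn_Icc_of_derivative_pos (hF : HasPolynomialIVT F)
    (hp : ∀ c ∈ Set.Ioo a b, 0 < p.derivative.eval c) :
    StrictMonoOn (fun x ↦ p.eval x) (Set.Icc a b) := by
  have hIoo {x y : F} (hx : x ∈ Set.Ioo a b) (hy : y ∈ Set.Ioo a b) (hxy : x < y) :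
      p.eval x < p.eval y := 
    hF.eval_lt_eval_of_derivative_pos_Icc hxy fun c hc ↦
      hp c ⟨hx.1.trans_le hc.1, hc.2.trans_lt hy.2⟩
  have hleft {m : F} (hm : m ∈ Set.Ioo a b) : p.eval a ≤ p.eval m := by
    by_contra! h
    obtain ⟨m', ham', hm'm⟩ := exists_between hm.1
    have hm' : m' ∈ Set.Ioo a b := ⟨ham', hm'm.trans hm.2⟩
    obtain ⟨c, hc, hpc⟩ := hF.exists_eval_eq_of_gt ham' h (hIoo hm' hm hm'm)
    exact ((hIoo ⟨hc.1, hc.2.trans hm'.2⟩ hm' hc.2).trans (hIoo hm' hm hm'm)).ne hpc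
  have hright {m : F} (hm : m ∈ Set.Ioo a b) : p.eval m ≤ p.eval b := by
    by_contra! h
    obtain ⟨m', hmm', hm'b⟩ := exists_between hm.2
    have hm' : m' ∈ Set.Ioo a b := ⟨hm.1.trans hmm', hm'b⟩
    obtain ⟨c, hc, hpc⟩ := hF.exists_eval_eq_of_gt hm'b (hIoo hm hm' hmm') h
    exact ((hIoo hm hm' hmm').trans (hIoo hm' ⟨hm'.1.trans hc.1, hc.2⟩ hc.1)).ne' hpc
  intro x hx y hy hxy
  obtain ⟨m, hxm, hmy⟩ := exists_between hxy
  obtain ⟨m', hmm', hm'y⟩ := exists_between hmy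
  have hm : m ∈ Set.Ioo a b := ⟨hx.1.trans_lt hxm, hmy.trans_le hy.2⟩
  have hm' : m' ∈ Set.Ioo a b := ⟨hm.1.trans hmm', hm'y.trans_le hy.2⟩
  calc p.eval x ≤ p.eval m := ?_
    _ < p.eval m' := hIoo hm hm' hmm'
    _ ≤ p.eval y := ?_
  · rcases hx.1.eq_or_lt with rfl | hax
    · exact hleft hm
    · exact (hIoo ⟨hax, hxm.trans hm.2⟩ hm hxm).le
  · rcases hy.2.eq_or_lt with rfl | hyb
    · exact hright hm'
    · exact (hIoo hm' ⟨hm'.1.trans hm'y, hyb⟩ hm'y).le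

end HasPolynomialIVT

theorem abs_lt_one_add_sum_abs_coeff_of_isRoot {F : Type*} [Field F] [LinearOrder F]
    [IsStrictOrderedRing F] {p : Polynomial F} (hp : p.Monic) {x : F} (hx : p.IsRoot x) :
    |x| < 1 + ∑ i ∈ Finset.range p.natDegree, |p.coeff i| := by
  by_contra! hle
  have hsum : 0 ≤ ∑ i ∈ Finset.range p.natDegree, |p.coeff i| := by positivity
  have hx1 : 1 ≤ |x| := by linarith
  obtain ⟨d, hd⟩ : ∃ d, p.natDegree = d + 1 := Nat.exists_eq_succ_of_ne_zero fun h ↦ by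
    simp [hp.natDegree_eq_zero.1 h] at hx
  have hlead : x ^ (d + 1) = -∑ i ∈ Finset.range (d + 1), p.coeff i * x ^ i := by
    rw [Polynomial.IsRoot, Polynomial.eval_eq_sum_range, Finset.sum_range_succ, hp.coeff_natDegree,
      hd] at hx
    linear_combination hx
  have hpow : |x| * |x| ^ d ≤ (∑ i ∈ Finset.range p.natDegree, |p.coeff i|) * |x| ^ d := by
    rw [← pow_succ', ← abs_pow, hlead, abs_neg, hd, Finset.sum_mul]
    refine (Finset.abs_sum_le_sum_abs _ _).trans (Finset.sum_le_sum fun i hi ↦ ?_)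
    rw [abs_mul, abs_pow]
    gcongr
    exact Finset.mem_range_succ_iff.1 hi
  linarith [le_of_mul_le_mul_right hpow (by positivity)]

theorem sign_sub_eq_of_strictMonoOn {F E : Type*} [AddCommGroup F] [LinearOrder F]
    [IsOrderedAddMonoid F] [AddCommGroup E] [LinearOrder E] [IsOrderedAddMonoid E] {φ : F → E}
    {s : Set F} (hφ : StrictMonoOn φ s) {x y : F} (hx : x ∈ s) (hy : y ∈ s) :
    SignType.sign (x - y) = SignType.sign (φ x - φ y) := by
  rcases lt_trichotomy x y with h | rfl | h
  · rw [sign_neg (sub_neg.2 h), sign_neg (sub_neg.2 (hφ hx hy h))]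
  · simp
  · rw [sign_pos (sub_pos.2 h), sign_pos (sub_pos.2 (hφ hy hx h))]

theorem exists_Ioo_disjoint_of_forall_ne {K F : Type*} [LinearOrder K] [LinearOrder F] {i : K → F}
    {α : F} (hα : ∀ c, i c ≠ α) (Z : Finset K) (hlt : ∃ c, i c < α) (hgt : ∃ c, α < i c) :
    ∃ a b, i a < α ∧ α < i b ∧ ∀ c ∈ Z, c ∉ Set.Ioo a b := by
  classical
  obtain ⟨lo, hlo⟩ := hlt
  obtain ⟨hi, hhi⟩ := hgt
  obtain ⟨a, ha, hmax⟩ := (insert lo (Z.filter (i · < α))).exists_max_image id (by simp)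
  obtain ⟨b, hb, hmin⟩ := (insert hi (Z.filter (α < i ·))).exists_min_image id (by simp)
  simp only [Finset.mem_insert, Finset.mem_filter, id] at ha hb hmax hmin
  refine ⟨a, b, by rcases ha with rfl | ha <;> tauto, by rcases hb with rfl | hb <;> tauto,
    fun c hc hcab ↦ ?_⟩
  rcases lt_or_gt_of_ne (hα c) with h | h
  · exact hcab.1.not_ge (hmax c (.inr ⟨hc, h⟩))
  · exact hcab.2.not_ge (hmin c (.inr ⟨hc, h⟩))

/-- Every zero in `F` of a nonzero polynomial of degree less than `d` over `K` comes from `K`. -/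
def RootsMemRange {K F : Type*} [Field K] [Field F] (i : K →+* F) (d : ℕ) : Prop :=
  ∀ ⦃h : Polynomial K⦄, h ≠ 0 → h.natDegree < d → ∀ ⦃x : F⦄, h.eval₂ i x = 0 → x ∈ i.range

theorem natDegree_ne_zero_of_eval₂_eq_zero {K F : Type*} [Field K] [Field F] {i : K →+* F}
    {f : Polynomial K} (hf : f ≠ 0) {x : F} (hx : f.eval₂ i x = 0) : f.natDegree ≠ 0 := fun h ↦ by
  obtain ⟨c, rfl⟩ := Polynomial.natDegree_eq_zero.1 h
  rw [Polynomial.eval₂_C, map_eq_zero] at hx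
  simp [hx] at hf

theorem eval₂_mod_of_eval₂_eq_zero {K F : Type*} [Field K] [CommRing F] {i : K →+* F}
    {f h : Polynomial K} {x : F} (hx : f.eval₂ i x = 0) : (h % f).eval₂ i x = h.eval₂ i x := by
  conv_rhs => rw [← EuclideanDomain.mod_add_div h f, Polynomial.eval₂_add, Polynomial.eval₂_mul, hx]
  rw [zero_mul, add_zero]

section SignTransfer

variable {K F₁ F₂ : Type*} [Field K] [LinearOrder K]
  [Field F₁] [LinearOrder F₁] [IsStrictOrderedRing F₁]
  [Field F₂] [LinearOrder F₂] [IsStrictOrderedRing F₂] {i₁ : K →+* F₁} {i₂ : K →+* F₂} {d : ℕ}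

theorem RootsMemRange.sign_eval₂_of_roots_eq_zero (h₁ : HasPolynomialIVT F₁)
    (r₁ : RootsMemRange i₁ d) (hi₁ : StrictMono i₁) {q : Polynomial K} (hq : q ≠ 0)
    (hd : q.natDegree < d) (hroots : q.roots = 0) (α : F₁) :
    SignType.sign (q.eval₂ i₁ α) = SignType.sign (q.eval 0) := by
  have hno (x : F₁) : ¬ (q.map i₁).IsRoot x := by
    rw [Polynomial.IsRoot, Polynomial.eval_map]
    intro hx
    obtain ⟨c, rfl⟩ := r₁ hq hd hx
    rw [Polynomial.eval₂_at_apply, map_eq_zero] at hx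
    simpa [hroots] using (Polynomial.mem_roots hq).2 hx
  have := h₁.sign_eval_eq_of_forall_not_isRoot (a := α) (b := i₁ 0) fun c _ ↦ hno c
  rw [Polynomial.eval_map, Polynomial.eval_map, Polynomial.eval₂_at_apply] at this
  exact this.trans (hi₁.sign_comp _)

theorem RootsMemRange.sign_eval₂_eq_prod_mul (h₁ : HasPolynomialIVT F₁)
    (r₁ : RootsMemRange i₁ d) (hi₁ : StrictMono i₁) {h q : Polynomial K} (hq : q ≠ 0)
    (hd : q.natDegree < d) (hroots : q.roots = 0)
    (hprod : (h.roots.map fun c ↦ Polynomial.X - Polynomial.C c).prod * q = h) (α : F₁) :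
    SignType.sign (h.eval₂ i₁ α) =
      (h.roots.map fun c ↦ SignType.sign (α - i₁ c)).prod * SignType.sign (q.eval 0) := by
  have hsign := map_multiset_prod signHom (h.roots.map fun c ↦ α - i₁ c)
  simp only [Multiset.map_map, Function.comp_def, signHom_apply] at hsign
  rw [← hsign, ← r₁.sign_eval₂_of_roots_eq_zero h₁ hi₁ hq hd hroots α, ← sign_mul]
  conv_lhs => rw [← hprod]
  simp [Polynomial.eval₂_mul, Polynomial.eval₂_multiset_prod, Multiset.map_map]

theorem sign_eval₂_eq_of_sign_sub_eq (h₁ : HasPolynomialIVT F₁) (h₂ : HasPolynomialIVT F₂)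
    (hi₁ : StrictMono i₁) (hi₂ : StrictMono i₂) (r₁ : RootsMemRange i₁ d)
    (r₂ : RootsMemRange i₂ d) {α : F₁} {β : F₂} {h : Polynomial K} (hd : h.natDegree < d)
    (hcut : ∀ c ∈ h.roots, SignType.sign (α - i₁ c) = SignType.sign (β - i₂ c)) :
    SignType.sign (h.eval₂ i₁ α) = SignType.sign (h.eval₂ i₂ β) := by
  obtain rfl | h0 := eq_or_ne h 0
  · simp
  obtain ⟨q, hprod, hdeg, hq⟩ := h.exists_prod_multiset_X_sub_C_mul
  have hq0 : q ≠ 0 := by rintro rfl; exact h0 (by rw [← hprod, mul_zero])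
  have hqd : q.natDegree < d := by omega
  have hlin : (h.roots.map fun c ↦ SignType.sign (α - i₁ c)) =
      h.roots.map fun c ↦ SignType.sign (β - i₂ c) := Multiset.map_congr rfl hcut
  rw [r₁.sign_eval₂_eq_prod_mul h₁ hi₁ hq0 hqd hq hprod,
    r₂.sign_eval₂_eq_prod_mul h₂ hi₂ hq0 hqd hq hprod, hlin]

theorem RootsMemRange.strictMonoOn_Icc (h₁ : HasPolynomialIVT F₁) (r₁ : RootsMemRange i₁ d)
    (hi₁ : StrictMono i₁) {f : Polynomial K} (hd : f.derivative.natDegree < d) {a b m : K}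
    (hm : m ∈ Set.Ioo a b) (hfm : 0 < f.derivative.eval m)
    (hroots : ∀ c ∈ f.derivative.roots, c ∉ Set.Ioo a b) :
    StrictMonoOn (fun x ↦ f.eval₂ i₁ x) (Set.Icc (i₁ a) (i₁ b)) := by
  have hf0 : f.derivative ≠ 0 := by intro h0; simp [h0] at hfm
  have hno {x : F₁} (hx : x ∈ Set.Ioo (i₁ a) (i₁ b)) : ¬ (f.map i₁).derivative.IsRoot x := by
    rw [Polynomial.IsRoot, Polynomial.derivative_map, Polynomial.eval_map]
    intro hroot
    obtain ⟨c, rfl⟩ := r₁ hf0 hd hroot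
    rw [Polynomial.eval₂_at_apply, map_eq_zero] at hroot
    exact hroots c ((Polynomial.mem_roots hf0).2 hroot) ⟨hi₁.lt_iff_lt.1 hx.1, hi₁.lt_iff_lt.1 hx.2⟩
  have hpos : 0 < (f.map i₁).derivative.eval (i₁ m) := by
    rw [Polynomial.derivative_map, Polynomial.eval_map, Polynomial.eval₂_at_apply, ← map_zero i₁]
    exact hi₁ hfm
  simp only [← Polynomial.eval_map]
  refine h₁.strictMonoOn_Icc_of_derivative_pos fun c hc ↦
    h₁.eval_pos_of_forall_not_isRoot (fun x hx ↦ hno ?_) hpos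
  exact Set.ordConnected_Ioo.uIcc_subset ⟨hi₁ hm.1, hi₁ hm.2⟩ hc hx

theorem exists_root_sign_sub_eq_of_derivative_pos (h₁ : HasPolynomialIVT F₁)
    (h₂ : HasPolynomialIVT F₂) (hi₁ : StrictMono i₁) (hi₂ : StrictMono i₂)
    (r₁ : RootsMemRange i₁ d) (r₂ : RootsMemRange i₂ d) {f : Polynomial K}
    (hd : f.derivative.natDegree < d) {α : F₁} (hα : f.eval₂ i₁ α = 0) {a b m : K}
    (ha : i₁ a < α) (hb : α < i₁ b) (hm : m ∈ Set.Ioo a b) (hfm : 0 < f.derivative.eval m)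
    (hroots : ∀ c ∈ f.derivative.roots, c ∉ Set.Ioo a b) :
    ∃ β, f.eval₂ i₂ β = 0 ∧ ∀ c, SignType.sign (α - i₁ c) = SignType.sign (β - i₂ c) := by
  have mono₁ := r₁.strictMonoOn_Icc h₁ hi₁ hd hm hfm hroots
  have mono₂ := r₂.strictMonoOn_Icc h₂ hi₂ hd hm hfm hroots
  have hab : a < b := hm.1.trans hm.2
  have hαmem : α ∈ Set.Icc (i₁ a) (i₁ b) := ⟨ha.le, hb.le⟩
  have hfa : f.eval a < 0 := by
    have := mono₁ ⟨le_rfl, (hi₁ hab).le⟩ hαmem ha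
    simpa only [hα, Polynomial.eval₂_at_apply, ← map_zero i₁, hi₁.lt_iff_lt] using this
  have hfb : 0 < f.eval b := by
    have := mono₁ hαmem ⟨(hi₁ hab).le, le_rfl⟩ hb
    simpa only [hα, Polynomial.eval₂_at_apply, ← map_zero i₁, hi₁.lt_iff_lt] using this
  obtain ⟨β, hβmem, hβ⟩ := h₂ (p := f.map i₂) (hi₂ hab)
    (by rw [Polynomial.eval_map, Polynomial.eval₂_at_apply, ← map_zero i₂]; exact hi₂ hfa)
    (by rw [Polynomial.eval_map, Polynomial.eval₂_at_apply, ← map_zero i₂]; exact hi₂ hfb)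
  rw [Polynomial.IsRoot, Polynomial.eval_map] at hβ
  refine ⟨β, hβ, fun c ↦ ?_⟩
  rcases lt_or_ge c a with hca | hac
  · rw [sign_pos (sub_pos.2 ((hi₁ hca).trans ha)), sign_pos (sub_pos.2 ((hi₂ hca).trans hβmem.1))]
  rcases lt_or_ge b c with hbc | hcb
  · rw [sign_neg (sub_neg.2 (hb.trans (hi₁ hbc))), sign_neg (sub_neg.2 (hβmem.2.trans (hi₂ hbc)))]
  rw [sign_sub_eq_of_strictMonoOn mono₁ hαmem ⟨hi₁.monotone hac, hi₁.monotone hcb⟩,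
    sign_sub_eq_of_strictMonoOn mono₂ (Set.Ioo_subset_Icc_self hβmem)
      ⟨hi₂.monotone hac, hi₂.monotone hcb⟩]
  simp only [hα, hβ, Polynomial.eval₂_at_apply, zero_sub, ← map_neg, hi₁.sign_comp, hi₂.sign_comp]

variable [IsStrictOrderedRing K]

theorem exists_abs_lt_map_of_eval₂_eq_zero (hi : StrictMono i₁) {f : Polynomial K} (hf : f ≠ 0)
    {x : F₁} (hx : f.eval₂ i₁ x = 0) : ∃ M, |x| < i₁ M := by
  have habs (c : K) : i₁ |c| = |i₁ c| := by
    rw [abs, hi.monotone.map_sup, map_neg, abs]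
  have hmonic := (Polynomial.monic_mul_leadingCoeff_inv hf).map i₁
  set g := f * Polynomial.C f.leadingCoeff⁻¹ with hg
  have hroot : (g.map i₁).IsRoot x := by
    rw [Polynomial.IsRoot, Polynomial.eval_map, hg, Polynomial.eval₂_mul, hx, zero_mul]
  refine ⟨1 + ∑ i ∈ Finset.range g.natDegree, |g.coeff i|, ?_⟩
  simpa [habs] using abs_lt_one_add_sum_abs_coeff_of_isRoot hmonic hroot

theorem exists_root_sign_sub_eq (h₁ : HasPolynomialIVT F₁) (h₂ : HasPolynomialIVT F₂)
    (hi₁ : StrictMono i₁) (hi₂ : StrictMono i₂) {f : Polynomial K} (hf : f ≠ 0)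
    (r₁ : RootsMemRange i₁ f.natDegree) (r₂ : RootsMemRange i₂ f.natDegree) {α : F₁}
    (hα : f.eval₂ i₁ α = 0) (hαK : α ∉ i₁.range) :
    ∃ β, f.eval₂ i₂ β = 0 ∧ ∀ c, SignType.sign (α - i₁ c) = SignType.sign (β - i₂ c) := by
  have hpos : f.natDegree ≠ 0 := natDegree_ne_zero_of_eval₂_eq_zero hf hα
  have hd : f.derivative.natDegree < f.natDegree := Polynomial.natDegree_derivative_lt hpos
  have hf' : f.derivative ≠ 0 := fun h ↦
    hpos (Polynomial.derivative_eq_zero.1 h)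
  obtain ⟨M, hM⟩ := exists_abs_lt_map_of_eval₂_eq_zero hi₁ hf hα
  rw [abs_lt, ← map_neg] at hM
  obtain ⟨a, b, ha, hb, hZ⟩ := exists_Ioo_disjoint_of_forall_ne (i := i₁)
    (fun c hc ↦ hαK ⟨c, hc⟩) f.derivative.roots.toFinset ⟨_, hM.1⟩ ⟨_, hM.2⟩
  simp only [Multiset.mem_toFinset] at hZ
  obtain ⟨m, hm⟩ := exists_between (hi₁.lt_iff_lt.1 (ha.trans hb))
  rcases lt_trichotomy (f.derivative.eval m) 0 with hneg | hzero | hpos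
  · simpa using exists_root_sign_sub_eq_of_derivative_pos h₁ h₂ hi₁ hi₂ r₁ r₂ (f := -f)
      (by simpa using hd) (by simpa using hα) ha hb hm (by simpa using hneg) (by simpa using hZ)
  · exact absurd hm (hZ m ((Polynomial.mem_roots hf').2 hzero))
  · exact exists_root_sign_sub_eq_of_derivative_pos h₁ h₂ hi₁ hi₂ r₁ r₂ hd hα ha hb hm hpos hZ

theorem exists_forall_sign_eval₂_eq_of_root (h₁ : HasPolynomialIVT F₁) (h₂ : HasPolynomialIVT F₂)
    (hi₁ : StrictMono i₁) (hi₂ : StrictMono i₂) {f : Polynomial K} (hf : f ≠ 0)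
    (r₁ : RootsMemRange i₁ f.natDegree) (r₂ : RootsMemRange i₂ f.natDegree) {α : F₁}
    (hα : f.eval₂ i₁ α = 0) (hαK : α ∉ i₁.range) :
    ∃ β, ∀ h : Polynomial K,
      SignType.sign (h.eval₂ i₁ α) = SignType.sign (h.eval₂ i₂ β) := by
  obtain ⟨β, hβ, hcut⟩ := exists_root_sign_sub_eq h₁ h₂ hi₁ hi₂ hf r₁ r₂ hα hαK
  refine ⟨β, fun h ↦ ?_⟩
  rw [← eval₂_mod_of_eval₂_eq_zero hα, ← eval₂_mod_of_eval₂_eq_zero hβ]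
  exact sign_eval₂_eq_of_sign_sub_eq h₁ h₂ hi₁ hi₂ r₁ r₂
    (Polynomial.natDegree_mod_lt h (natDegree_ne_zero_of_eval₂_eq_zero hf hα)) fun c _ ↦ hcut c

end SignTransfer

theorem eval₂_inv_mul_pow {R F : Type*} [CommRing R] [Field F] (i : R →+* F) (h : Polynomial R)
    {x : F} (hx : x ≠ 0) : h.eval₂ i x⁻¹ * x ^ h.natDegree = h.reverse.eval₂ i x := by
  have := invertibleOfNonzero (inv_ne_zero hx)
  have hrev := Polynomial.eval₂_reverse_mul_pow i x⁻¹ h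
  rw [invOf_eq_inv, inv_inv] at hrev
  rw [← hrev, mul_assoc, ← mul_pow, inv_mul_cancel₀ hx, one_pow, mul_one]

section CommonSubfield

universe u v

variable {F₁ : Type u} {F₂ : Type v} [Field F₁] [LinearOrder F₁] [Field F₂] [LinearOrder F₂]

/-- A ring of pairs whose two components always have the same sign; it is the graph of an
order isomorphism between a subring of `F₁` and a subring of `F₂`. -/
def SignPreserving (G : Subring (F₁ × F₂)) : Prop :=
  ∀ x ∈ G, SignType.sign x.1 = SignType.sign x.2

namespace SignPreserving

variable {G : Subring (F₁ × F₂)}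

theorem exists_le_maximal (hG : SignPreserving G) : ∃ G', G ≤ G' ∧ Maximal SignPreserving G' := by
  refine zorn_le_nonempty₀ {G : Subring (F₁ × F₂) | SignPreserving G}
    (fun c hc hchain H hH ↦ ?_) G hG
  refine ⟨sSup c, fun x hx ↦ ?_, fun _ ↦ le_sSup⟩
  obtain ⟨s, hs, hxs⟩ := (Subring.mem_sSup_of_directedOn ⟨H, hH⟩ hchain.directedOn).1 hx
  exact hc hs x hxs

theorem fst_eq_zero_iff (hG : SignPreserving G) {x : F₁ × F₂} (hx : x ∈ G) : x.1 = 0 ↔ x.2 = 0 := by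
  rw [← sign_eq_zero_iff, hG x hx, sign_eq_zero_iff]

theorem mem_of_forall_sign_eval₂_eq (hG : Maximal SignPreserving G) {x : F₁ × F₂}
    (hx : ∀ h : Polynomial G,
      SignType.sign (h.eval₂ ((RingHom.fst F₁ F₂).comp G.subtype) x.1) =
        SignType.sign (h.eval₂ ((RingHom.snd F₁ F₂).comp G.subtype) x.2)) : x ∈ G := by
  let ev : Polynomial G →+* F₁ × F₂ :=
    (Polynomial.eval₂RingHom ((RingHom.fst F₁ F₂).comp G.subtype) x.1).prod
      (Polynomial.eval₂RingHom ((RingHom.snd F₁ F₂).comp G.subtype) x.2)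
  have hev : SignPreserving ev.range := by
    rintro _ ⟨h, rfl⟩
    exact hx h
  have hle : G ≤ ev.range := fun y hy ↦ ⟨Polynomial.C ⟨y, hy⟩, by simp [ev]⟩
  exact hG.le_of_ge hev hle ⟨Polynomial.X, by simp [ev]⟩

variable [IsStrictOrderedRing F₁] [IsStrictOrderedRing F₂]

theorem inv_mem (hG : Maximal SignPreserving G) {x : F₁ × F₂} (hx : x ∈ G) (hx₁ : x.1 ≠ 0) :
    (x.1⁻¹, x.2⁻¹) ∈ G := by
  have hx₂ : x.2 ≠ 0 := mt (hG.prop.fst_eq_zero_iff hx).2 hx₁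
  refine mem_of_forall_sign_eval₂_eq hG fun h ↦ ?_
  have hmem : (h.reverse.eval₂ ((RingHom.fst F₁ F₂).comp G.subtype) x.1,
      h.reverse.eval₂ ((RingHom.snd F₁ F₂).comp G.subtype) x.2) ∈ G := by
    convert (h.reverse.eval ⟨x, hx⟩).2 using 1
    ext
    · exact Polynomial.eval₂_at_apply ((RingHom.fst F₁ F₂).comp G.subtype) ⟨x, hx⟩
    · exact Polynomial.eval₂_at_apply ((RingHom.snd F₁ F₂).comp G.subtype) ⟨x, hx⟩
  have hsign := hG.prop _ hmem
  rw [← eval₂_inv_mul_pow _ h hx₁, ← eval₂_inv_mul_pow _ h hx₂, sign_mul, sign_mul, sign_pow,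
    sign_pow, hG.prop x hx] at hsign
  exact mul_right_cancel₀ (pow_ne_zero _ (sign_ne_zero.2 hx₂)) hsign

theorem isField (hG : Maximal SignPreserving G) : IsField G where
  exists_pair_ne := ⟨0, 1, zero_ne_one⟩
  mul_comm := mul_comm
  mul_inv_cancel {x} hx := by
    have hx₁ : (x : F₁ × F₂).1 ≠ 0 := fun h ↦
      hx (Subtype.ext (Prod.ext h ((hG.prop.fst_eq_zero_iff x.2).1 h)))
    have hx₂ : (x : F₁ × F₂).2 ≠ 0 := mt (hG.prop.fst_eq_zero_iff x.2).2 hx₁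
    exact ⟨⟨_, inv_mem hG x.2 hx₁⟩, by ext <;> simp [hx₁, hx₂]⟩

end SignPreserving

variable [IsStrictOrderedRing F₁] [IsStrictOrderedRing F₂]

theorem RootsMemRange.succ {K : Type*} [Field K] [LinearOrder K] [IsStrictOrderedRing K]
    {i₁ : K →+* F₁} {i₂ : K →+* F₂} {d : ℕ} (h₁ : HasPolynomialIVT F₁) (h₂ : HasPolynomialIVT F₂)
    (hi₁ : StrictMono i₁) (hi₂ : StrictMono i₂)
    (hmem : ∀ α β, (∀ h : Polynomial K,
      SignType.sign (h.eval₂ i₁ α) = SignType.sign (h.eval₂ i₂ β)) → α ∈ i₁.range)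
    (r₁ : RootsMemRange i₁ d) (r₂ : RootsMemRange i₂ d) : RootsMemRange i₁ (d + 1) := by
  intro f hf hd α hα
  by_contra hαK
  obtain hd | rfl := Nat.lt_succ_iff_lt_or_eq.1 hd
  · exact hαK (r₁ hf hd hα)
  · obtain ⟨β, hβ⟩ := exists_forall_sign_eval₂_eq_of_root h₁ h₂ hi₁ hi₂ hf r₁ r₂ hα hαK
    exact hαK (hmem α β hβ)

theorem rootsMemRange_of_forall_sign_eval₂_eq {K : Type*} [Field K] [LinearOrder K]
    [IsStrictOrderedRing K] {i₁ : K →+* F₁} {i₂ : K →+* F₂} (h₁ : HasPolynomialIVT F₁)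
    (h₂ : HasPolynomialIVT F₂) (hi₁ : StrictMono i₁) (hi₂ : StrictMono i₂)
    (hmem : ∀ α β, (∀ h : Polynomial K,
      SignType.sign (h.eval₂ i₁ α) = SignType.sign (h.eval₂ i₂ β)) → α ∈ i₁.range ∧ β ∈ i₂.range)
    (d : ℕ) : RootsMemRange i₁ d ∧ RootsMemRange i₂ d := by
  induction d with
  | zero => exact ⟨fun _ _ hd ↦ absurd hd (Nat.not_lt_zero _),
      fun _ _ hd ↦ absurd hd (Nat.not_lt_zero _)⟩
  | succ d ih =>
    exact ⟨ih.1.succ h₁ h₂ hi₁ hi₂ (fun α β h ↦ (hmem α β h).1) ih.2,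
      ih.2.succ h₂ h₁ hi₂ hi₁ (fun β α h ↦ (hmem α β fun p ↦ (h p).symm).2) ih.1⟩

theorem exists_orderedField_rootsMemRange (h₁ : HasPolynomialIVT F₁) (h₂ : HasPolynomialIVT F₂)
    {B : Type*} [CommRing B] {a₁ : B →+* F₁} {a₂ : B →+* F₂}
    (ha : ∀ b, SignType.sign (a₁ b) = SignType.sign (a₂ b)) :
    ∃ (K : Type (max u v)) (_ : Field K) (_ : LinearOrder K) (_ : IsStrictOrderedRing K)
      (κ : B →+* K) (i₁ : K →+* F₁) (i₂ : K →+* F₂), StrictMono i₁ ∧ StrictMono i₂ ∧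
        (∀ b, i₁ (κ b) = a₁ b) ∧ (∀ b, i₂ (κ b) = a₂ b) ∧
        ∀ d, RootsMemRange i₁ d ∧ RootsMemRange i₂ d := by
  have hrange : SignPreserving (a₁.prod a₂).range := by
    rintro _ ⟨b, rfl⟩
    exact ha b
  obtain ⟨G, hle, hG⟩ := hrange.exists_le_maximal
  -- Passing to an isomorphic copy `K` of `G` hides the product order that `G` inherits.
  obtain ⟨K, _, ⟨e⟩⟩ : ∃ (K : Type _) (_ : Field K), Nonempty (K ≃+* G) :=
    ⟨G, (SignPreserving.isField hG).toField, ⟨RingEquiv.refl G⟩⟩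
  let i₁ : K →+* F₁ := ((RingHom.fst F₁ F₂).comp G.subtype).comp e
  let i₂ : K →+* F₂ := ((RingHom.snd F₁ F₂).comp G.subtype).comp e
  let : LinearOrder K := LinearOrder.lift' i₁ i₁.injective
  have hi₁ : StrictMono i₁ := fun _ _ h ↦ h
  have : IsStrictOrderedRing K := Function.Injective.isStrictOrderedRing i₁
    (map_zero _) (map_one _) (map_add _) (map_mul _) hi₁.le_iff_le hi₁.lt_iff_lt
  have hi₂ : StrictMono i₂ := (strictMono_iff_map_pos i₂).2 fun c hc ↦ by
    rw [← sign_eq_one_iff, ← sign_pos hc, ← hi₁.sign_comp]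
    exact (hG.prop (e c) (e c).2).symm
  refine ⟨K, _, _, ‹_›, (e.symm : G →+* K).comp
    ((Subring.inclusion hle).comp (a₁.prod a₂).rangeRestrict), i₁, i₂, hi₁, hi₂,
    fun b ↦ by simp [i₁], fun b ↦ by simp [i₂],
    rootsMemRange_of_forall_sign_eval₂_eq h₁ h₂ hi₁ hi₂ fun α β h ↦ ?_⟩
  have hmem : (α, β) ∈ G := SignPreserving.mem_of_forall_sign_eval₂_eq hG fun p ↦ by
    simpa [i₁, i₂, Polynomial.eval₂_map, RingHom.comp_assoc] using h (p.map e.symm)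
  exact ⟨⟨e.symm ⟨_, hmem⟩, by simp [i₁]⟩, ⟨e.symm ⟨_, hmem⟩, by simp [i₂]⟩⟩

end CommonSubfield

section OneVariable

variable {F₁ F₂ : Type*} [Field F₁] [LinearOrder F₁] [IsStrictOrderedRing F₁] [Field F₂]
  [LinearOrder F₂] [IsStrictOrderedRing F₂]

theorem exists_forall_mem_sign_sub_eq {K : Type*} [Field K] [LinearOrder K] {i₁ : K →+* F₁}
    {i₂ : K →+* F₂} (hi₁ : StrictMono i₁) (hi₂ : StrictMono i₂) (t : F₁) (Z : Finset K) :
    ∃ s, ∀ c ∈ Z, SignType.sign (t - i₁ c) = SignType.sign (s - i₂ c) := by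
  classical
  by_cases ht : t ∈ i₁.range
  · obtain ⟨c, rfl⟩ := ht
    exact ⟨i₂ c, fun e _ ↦ by rw [← map_sub, ← map_sub, hi₁.sign_comp, hi₂.sign_comp]⟩
  obtain ⟨s, hlo, hhi⟩ := Order.exists_between_finsets ((Z.filter (i₁ · < t)).image i₂)
    ((Z.filter (t < i₁ ·)).image i₂) (by
      simp only [Finset.forall_mem_image, Finset.mem_filter, hi₂.lt_iff_lt]
      exact fun a ha b hb ↦ hi₁.lt_iff_lt.1 (ha.2.trans hb.2))
  simp only [Finset.forall_mem_image, Finset.mem_filter] at hlo hhi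
  refine ⟨s, fun c hc ↦ ?_⟩
  rcases lt_or_gt_of_ne (fun h ↦ ht ⟨c, h⟩ : i₁ c ≠ t) with h | h
  · rw [sign_pos (sub_pos.2 h), sign_pos (sub_pos.2 (hlo ⟨hc, h⟩))]
  · rw [sign_neg (sub_neg.2 h), sign_neg (sub_neg.2 (hhi ⟨hc, h⟩))]

theorem exists_forall_mem_sign_eval₂_eq (h₁ : HasPolynomialIVT F₁) (h₂ : HasPolynomialIVT F₂)
    {B : Type*} [CommRing B] {a₁ : B →+* F₁} {a₂ : B →+* F₂}
    (ha : ∀ b, SignType.sign (a₁ b) = SignType.sign (a₂ b)) (t : F₁) (A : Finset (Polynomial B)) :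
    ∃ s, ∀ p ∈ A, SignType.sign (p.eval₂ a₁ t) = SignType.sign (p.eval₂ a₂ s) := by
  classical
  obtain ⟨K, _, _, _, κ, i₁, i₂, hi₁, hi₂, hκ₁, hκ₂, hroots⟩ :=
    exists_orderedField_rootsMemRange h₁ h₂ ha
  obtain rfl : i₁.comp κ = a₁ := RingHom.ext hκ₁
  obtain rfl : i₂.comp κ = a₂ := RingHom.ext hκ₂
  obtain ⟨s, hs⟩ := exists_forall_mem_sign_sub_eq hi₁ hi₂ t
    (A.biUnion fun p ↦ (p.map κ).roots.toFinset)
  refine ⟨s, fun p hp ↦ ?_⟩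
  rw [← Polynomial.eval₂_map, ← Polynomial.eval₂_map]
  exact sign_eval₂_eq_of_sign_sub_eq h₁ h₂ hi₁ hi₂ (hroots _).1 (hroots _).2 (Nat.lt_succ_self _)
    fun c hc ↦ hs c (Finset.mem_biUnion.2 ⟨p, hp, Multiset.mem_toFinset.2 hc⟩)

end OneVariable

section Ultrapower

/-- The diagonal embedding of a ring into its germs along a filter. -/
def germDiagonal {I : Type*} (φ : Filter I) (R : Type*) [CommRing R] : R →+* Filter.Germ φ R :=
  (Filter.Germ.coeRingHom φ).comp (Pi.constRingHom I R)

variable {I R : Type*} {φ : Ultrafilter I}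

theorem HasPolynomialIVT.germ [Field R] [LinearOrder R] (hR : HasPolynomialIVT R) :
    HasPolynomialIVT (Filter.Germ (φ : Filter I) R) := by
  intro p a b hab hpa hpb
  obtain ⟨q, rfl⟩ := Polynomial.map_surjective (Filter.Germ.coeRingHom (φ : Filter I))
    Quotient.mk_surjective p
  have heval (x : I → R) : (q.map (Filter.Germ.coeRingHom (φ : Filter I))).eval
      (x : Filter.Germ (φ : Filter I) R) =
      ((fun j ↦ (q.map (Pi.evalRingHom _ j)).eval (x j) : I → R) :
        Filter.Germ (φ : Filter I) R) := by
    rw [← Filter.Germ.coe_coeRingHom, Polynomial.eval_map_apply]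
    congr 1
    ext j
    exact (Polynomial.eval_map_apply (Pi.evalRingHom (fun _ ↦ R) j) x).symm
  induction a using Filter.Germ.inductionOn with | _ a
  induction b using Filter.Germ.inductionOn with | _ b
  rw [heval] at hpa hpb
  have hev : ∀ᶠ j in (φ : Filter I), ∃ c ∈ Set.Ioo (a j) (b j),
      (q.map (Pi.evalRingHom _ j)).IsRoot c := by
    filter_upwards [Filter.Germ.coe_lt.1 hab, Filter.Germ.coe_lt.1 hpa, Filter.Germ.coe_lt.1 hpb]
      with j hab ha hb using hR hab ha hb
  obtain ⟨c, hc⟩ := hev.choice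
  refine ⟨c, ⟨Filter.Germ.coe_lt.2 (hc.mono fun j hj ↦ hj.1.1),
    Filter.Germ.coe_lt.2 (hc.mono fun j hj ↦ hj.1.2)⟩, ?_⟩
  rw [Polynomial.IsRoot, heval]
  exact Filter.Germ.coe_eq.2 (hc.mono fun j hj ↦ hj.2)

theorem eventually_sign_eq_sign_germ [LinearOrder R] [Zero R] (f : I → R) :
    ∀ᶠ j in (φ : Filter I),
      SignType.sign (f j) = SignType.sign (f : Filter.Germ (φ : Filter I) R) := by
  rcases lt_trichotomy (f : Filter.Germ (φ : Filter I) R) 0 with h | h | h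
  · rw [sign_neg h]
    exact (Filter.Germ.coe_lt.1 h).mono fun j hj ↦ sign_neg hj
  · rw [h, sign_zero]
    exact (Filter.Germ.coe_eq.1 h).mono fun j hj ↦ sign_eq_zero_iff.2 hj
  · rw [sign_pos h]
    exact (Filter.Germ.coe_lt.1 h).mono fun j hj ↦ sign_pos hj

theorem eval₂_germ [CommRing R] {σ : Type*} (y : σ → I → R) (p : MvPolynomial σ R) :
    eval₂ (germDiagonal (φ : Filter I) R) (fun l ↦ (y l : Filter.Germ (φ : Filter I) R)) p =
      ((fun j ↦ eval (y · j) p : I → R) : Filter.Germ (φ : Filter I) R) := by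
  have heval : eval₂ (Pi.constRingHom I R) y p = fun j ↦ eval (y · j) p :=
    funext fun j ↦ eval₂_comp_left (Pi.evalRingHom (fun _ ↦ R) j) (Pi.constRingHom I R) y p
  rw [← heval]
  exact (eval₂_comp_left (Filter.Germ.coeRingHom (φ : Filter I)) (Pi.constRingHom I R) y p).symm

end Ultrapower

theorem eval₂_finSuccEquiv {R S : Type*} [CommSemiring R] [CommSemiring S] {n : ℕ} (i : R →+* S)
    (t : S) (x : Fin n → S) (p : MvPolynomial (Fin (n + 1)) R) :
    (finSuccEquiv R n p).eval₂ (eval₂Hom i x) t = eval₂ i (Fin.cons t x) p := by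
  induction p using MvPolynomial.induction_on with
  | C a => simp [finSuccEquiv_apply]
  | add p q hp hq => simp only [map_add, Polynomial.eval₂_add, eval₂_add, hp, hq]
  | mul_X p l hp =>
    rw [map_mul, Polynomial.eval₂_mul, eval₂_mul, hp, eval₂_X]
    refine l.cases ?_ fun l ↦ ?_ <;> simp [finSuccEquiv_apply]

section Transfer

variable {R Ω : Type*} [Field R] [LinearOrder R] [Field Ω] [LinearOrder Ω]

theorem exists_ultrafilter_sign_eval₂_eq {i : R →+* Ω} {n : ℕ} {x : Fin n → Ω}
    (hx : ∀ A : Finset (MvPolynomial (Fin n) R), ∃ y, ∀ p ∈ A,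
      SignType.sign (eval₂ i x p) = SignType.sign (eval y p)) :
    ∃ (φ : Ultrafilter (Finset (MvPolynomial (Fin n) R)))
      (y : Fin n → Finset (MvPolynomial (Fin n) R) → R), ∀ p,
      SignType.sign (eval₂ i x p) =
        SignType.sign (eval₂ (germDiagonal (φ : Filter (Finset (MvPolynomial (Fin n) R))) R)
          (fun l ↦ (y l : Filter.Germ (φ : Filter (Finset (MvPolynomial (Fin n) R))) R)) p) := by
  choose y hy using hx
  refine ⟨Ultrafilter.of Filter.atTop, fun l S ↦ y S l, fun p ↦ ?_⟩
  have hmem := (Filter.eventually_ge_atTop ({p} : Finset (MvPolynomial (Fin n) R))).filter_mono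
    (Ultrafilter.of_le _)
  obtain ⟨S, hpS, hS⟩ := (hmem.and (eventually_sign_eq_sign_germ fun S ↦ eval (y S) p)).exists
  rw [eval₂_germ, hy S p (Finset.singleton_subset_iff.1 hpS), hS]

theorem exists_forall_mem_sign_eval_eq [IsStrictOrderedRing R] [IsStrictOrderedRing Ω]
    (hR : HasPolynomialIVT R) (hΩ : HasPolynomialIVT Ω) (i : R →+* Ω) {n : ℕ} (x : Fin n → Ω)
    (A : Finset (MvPolynomial (Fin n) R)) :
    ∃ y, ∀ p ∈ A, SignType.sign (eval₂ i x p) = SignType.sign (eval y p) := by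
  classical
  induction n with
  | zero =>
    refine ⟨Fin.elim0, fun p _ ↦ ?_⟩
    rw [← (hR.strictMono_ringHom i).sign_comp, ← eval₂_id, eval₂_comp_left, RingHom.comp_id,
      Subsingleton.elim x (i ∘ Fin.elim0)]
  | succ n ih =>
    obtain ⟨φ, y, hy⟩ := exists_ultrafilter_sign_eval₂_eq (ih (Fin.tail x))
    obtain ⟨t, ht⟩ := exists_forall_mem_sign_eval₂_eq hΩ hR.germ
      (a₁ := eval₂Hom i (Fin.tail x)) (a₂ := eval₂Hom _ _) hy (x 0) (A.image (finSuccEquiv R n))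
    induction t using Filter.Germ.inductionOn with | _ t
    have hev (p) (hp : p ∈ A) : ∀ᶠ S in (φ : Filter _),
        SignType.sign (eval₂ i x p) = SignType.sign (eval (Fin.cons (t S) (y · S)) p) := by
      have hp := ht _ (Finset.mem_image_of_mem _ hp)
      have hcons : (Fin.cons (t : Filter.Germ (φ : Filter _) R) fun l ↦ (y l : Filter.Germ _ R)) =
          fun l ↦ (Filter.Germ.ofFun fun S ↦ (Fin.cons (t S) (y · S) : Fin (n + 1) → R) l) :=
        funext fun l ↦ l.cases rfl fun _ ↦ rfl
      rw [eval₂_finSuccEquiv, eval₂_finSuccEquiv, hcons, eval₂_germ] at hp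
      filter_upwards [eventually_sign_eq_sign_germ (φ := φ) fun S ↦
        eval (Fin.cons (t S) (y · S)) p] with S hS
      rw [hS, ← hp, Fin.cons_self_tail x]
    obtain ⟨S, hS⟩ := ((Filter.eventually_all_finset A).2 hev).exists
    exact ⟨_, hS⟩

end Transfer

section Preordering

variable {A : Type*} [CommRing A]

theorem mem_sup_closure_singleton_iff {P : Subsemiring A} (hP : ∀ x, IsSquare x → x ∈ P)
    {a x : A} : x ∈ P ⊔ Subsemiring.closure {a} ↔ ∃ s ∈ P, ∃ t ∈ P, x = s + a * t := by
  constructor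
  · let Q : Subsemiring A :=
      { carrier := {x | ∃ s ∈ P, ∃ t ∈ P, x = s + a * t}
        zero_mem' := ⟨0, zero_mem P, 0, zero_mem P, by ring⟩
        one_mem' := ⟨1, one_mem P, 0, zero_mem P, by ring⟩
        add_mem' := by
          rintro _ _ ⟨s, hs, t, ht, rfl⟩ ⟨s', hs', t', ht', rfl⟩
          exact ⟨s + s', add_mem hs hs', t + t', add_mem ht ht', by ring⟩
        mul_mem' := by
          rintro _ _ ⟨s, hs, t, ht, rfl⟩ ⟨s', hs', t', ht', rfl⟩
          exact ⟨s * s' + a * a * (t * t'),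
            add_mem (mul_mem hs hs') (mul_mem (hP _ ⟨a, rfl⟩) (mul_mem ht ht')),
            s * t' + t * s', add_mem (mul_mem hs ht') (mul_mem ht hs'), by ring⟩ }
    have hPQ : P ≤ Q := fun s hs ↦ ⟨s, hs, 0, zero_mem P, by ring⟩
    have haQ : a ∈ Q := ⟨0, zero_mem P, 1, one_mem P, by ring⟩
    exact fun hx ↦ sup_le hPQ (Subsemiring.closure_le.2 (Set.singleton_subset_iff.2 haQ)) hx
  · rintro ⟨s, hs, t, ht, rfl⟩
    exact add_mem (le_sup_left (b := Subsemiring.closure {a}) hs)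
      (mul_mem (le_sup_right (a := P) (Subsemiring.mem_closure_of_mem rfl))
        (le_sup_left (b := Subsemiring.closure {a}) ht))

/-- The preordering of `A` generated by `G`: the smallest subsemiring containing `G` and all
squares. It is not bundled as a `RingPreordering` because it contains `-1` when `G` is
inconsistent. -/
def generatedPreordering (G : Set A) : Subsemiring A :=
  Subsemiring.sumSq A ⊔ Subsemiring.closure G

theorem mem_generatedPreordering_of_isSquare (G : Set A) (x : A) (hx : IsSquare x) :
    x ∈ generatedPreordering G :=
  le_sup_left (a := Subsemiring.sumSq A) (Subsemiring.mem_sumSq.2 hx.isSumSq)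

theorem subset_generatedPreordering (G : Set A) : G ⊆ generatedPreordering G :=
  Subsemiring.subset_closure.trans (le_sup_right (a := Subsemiring.sumSq A))

theorem exists_isMax_ringPreordering_ge (P : RingPreordering A) : ∃ O, P ≤ O ∧ IsMax O := by
  refine zorn_le_nonempty_Ici₀ P (fun c _ hc Q hQ ↦ ?_) P le_rfl
  have hdir : DirectedOn (· ≤ ·) (RingPreordering.toSubsemiring '' c) :=
    directedOn_image.2 hc.directedOn
  have hmem {x : A} : x ∈ sSup (RingPreordering.toSubsemiring '' c) ↔ ∃ O ∈ c, x ∈ O := by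
    rw [Subsemiring.mem_sSup_of_directedOn (Set.Nonempty.image _ ⟨Q, hQ⟩) hdir,
      Set.exists_mem_image]
    rfl
  exact ⟨{ toSubsemiring := sSup (RingPreordering.toSubsemiring '' c)
           mem_of_isSquare' := fun hx ↦ hmem.2 ⟨Q, hQ, Q.mem_of_isSquare hx⟩
           neg_one_notMem' := fun h ↦ (hmem.1 h).elim fun O hO ↦ O.neg_one_notMem hO.2 },
    fun O hO x hx ↦ hmem.2 ⟨O, hO, hx⟩⟩

theorem isOrdering_of_isMax {P : RingPreordering A} (hP : IsMax P) : P.IsOrdering := by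
  have neg_one_mem_sup {a : A} (ha : a ∉ P) : -1 ∈ P.toSubsemiring ⊔ Subsemiring.closure {a} := by
    by_contra hneg
    let Q : RingPreordering A :=
      { toSubsemiring := P.toSubsemiring ⊔ Subsemiring.closure {a}
        mem_of_isSquare' := fun hx ↦ le_sup_left (a := P.toSubsemiring) (P.mem_of_isSquare hx)
        neg_one_notMem' := hneg }
    have hPQ : P ≤ Q := fun x hx ↦ le_sup_left (a := P.toSubsemiring) hx
    exact ha (hP hPQ
      (le_sup_right (a := P.toSubsemiring) (Subsemiring.mem_closure_of_mem rfl)))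
  refine RingPreordering.isOrdering_iff.2 fun a b hab ↦ ?_
  by_contra! hnot
  obtain ⟨s, hs, t, ht, ha⟩ :=
    (mem_sup_closure_singleton_iff fun _ ↦ P.mem_of_isSquare).1 (neg_one_mem_sup hnot.1)
  obtain ⟨s', hs', t', ht', hb⟩ :=
    (mem_sup_closure_singleton_iff fun _ ↦ P.mem_of_isSquare).1 (neg_one_mem_sup hnot.2)
  have hneg : -1 = -(a * b) * (t * t') + (s + s' + s * s') := by
    linear_combination (1 + s') * ha - a * t * hb
  exact P.neg_one_notMem (hneg ▸ add_mem (mul_mem hab (mul_mem ht ht'))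
    (add_mem (add_mem hs hs') (mul_mem hs hs')))

theorem exists_linearOrder_of_isOrdering {F : Type*} [Field F] (P : RingPreordering F)
    [P.IsOrdering] : ∃ (_ : LinearOrder F) (_ : IsStrictOrderedRing F), ∀ x : F, 0 ≤ x ↔ x ∈ P := by
  classical
  let C : RingCone F :=
    { P.toSubsemiring with
      eq_zero_of_mem_of_neg_mem' := RingPreordering.eq_zero_of_mem_of_neg_mem }
  have : HasMemOrNegMem C := ⟨fun x ↦ mem_or_neg_mem P x⟩
  let _ : LinearOrder F := .mkOfAddGroupCone C
  have : IsOrderedRing F := .mkOfCone C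
  refine ⟨_, IsOrderedRing.toIsStrictOrderedRing F, fun x ↦ ?_⟩
  change x - 0 ∈ C ↔ _
  rw [sub_zero]
  rfl

end Preordering

section WeightedSumSq

variable {F : Type*} [Field F] {B : Type*} [CommRing B] [Algebra F B]

/-- The semiring of sums of squares of elements of a subalgebra `S` with weights in a semiring `Q`
of scalars: the smallest candidate for the nonnegative elements of an ordering of `S` in which the
elements of `Q` are nonnegative. -/
def weightedSumSq (Q : Subsemiring F) (S : Subalgebra F B) : Subsemiring B :=
  Submonoid.subsemiringClosure
    { carrier := {x | ∃ q ∈ Q, ∃ s ∈ S, x = q • s ^ 2}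
      one_mem' := ⟨1, one_mem Q, 1, one_mem S, by simp⟩
      mul_mem' := by
        rintro _ _ ⟨q, hq, s, hs, rfl⟩ ⟨q', hq', s', hs', rfl⟩
        exact ⟨q * q', mul_mem hq hq', s * s', mul_mem hs hs', by
          rw [smul_mul_smul_comm, mul_pow]⟩ }

variable {Q : Subsemiring F} {S : Subalgebra F B}

theorem smul_sq_mem_weightedSumSq {q : F} (hq : q ∈ Q) {s : B} (hs : s ∈ S) :
    q • s ^ 2 ∈ weightedSumSq Q S :=
  (Submonoid.subsemiringClosure_mem _).2 (AddSubmonoid.subset_closure ⟨q, hq, s, hs, rfl⟩)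

theorem weightedSumSq_induction {p : B → Prop} (zero : p 0)
    (smul_sq : ∀ q ∈ Q, ∀ s ∈ S, p (q • s ^ 2)) (add : ∀ x y, p x → p y → p (x + y)) {x : B}
    (hx : x ∈ weightedSumSq Q S) : p x := by
  replace hx := (Submonoid.subsemiringClosure_mem _).1 hx
  induction hx using AddSubmonoid.closure_induction with
  | mem x hx =>
    obtain ⟨q, hq, s, hs, rfl⟩ := hx
    exact smul_sq q hq s hs
  | zero => exact zero
  | add x y _ _ hx hy => exact add x y hx hy

theorem mem_weightedSumSq_map_iff {B' : Type*} [CommRing B'] [Algebra F B'] {φ : B →ₐ[F] B'}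
    {x : B'} : x ∈ weightedSumSq Q (S.map φ) ↔ ∃ w ∈ weightedSumSq Q S, φ w = x := by
  constructor
  · refine weightedSumSq_induction (p := fun x ↦ ∃ w ∈ weightedSumSq Q S, φ w = x)
      ⟨0, zero_mem _, map_zero φ⟩ ?_ ?_
    · rintro q hq _ ⟨s, hs, rfl⟩
      exact ⟨q • s ^ 2, smul_sq_mem_weightedSumSq hq hs, by simp⟩
    · rintro _ _ ⟨v, hv, rfl⟩ ⟨w, hw, rfl⟩
      exact ⟨v + w, add_mem hv hw, map_add φ v w⟩
  · rintro ⟨w, hw, rfl⟩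
    refine weightedSumSq_induction (p := fun w ↦ φ w ∈ weightedSumSq Q (S.map φ)) ?_ ?_ ?_ hw
    · simp
    · intro q hq s hs
      rw [map_smul, map_pow]
      exact smul_sq_mem_weightedSumSq hq ⟨s, hs, rfl⟩
    · intro v w hv hw
      rw [map_add]
      exact add_mem hv hw

theorem weightedSumSq_mono {S' : Subalgebra F B} (h : S ≤ S') :
    weightedSumSq Q S ≤ weightedSumSq Q S' := fun _ ↦
  weightedSumSq_induction (zero_mem _) (fun _ hq _ hs ↦ smul_sq_mem_weightedSumSq hq (h hs))
    fun _ _ ↦ add_mem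

theorem exists_mem_of_mem_weightedSumSq_bot {Q : RingPreordering F} {x : B}
    (hx : x ∈ weightedSumSq Q.toSubsemiring (⊥ : Subalgebra F B)) :
    ∃ q ∈ Q, algebraMap F B q = x := by
  refine weightedSumSq_induction (p := fun x ↦ ∃ q ∈ Q, algebraMap F B q = x)
    ⟨0, zero_mem Q, map_zero _⟩ ?_ ?_ hx
  · rintro q hq _ ⟨c, rfl⟩
    refine ⟨q * c ^ 2, mul_mem hq (Q.pow_two_mem c), ?_⟩
    simp [Algebra.smul_def]
  · rintro _ _ ⟨q, hq, rfl⟩ ⟨q', hq', rfl⟩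
    exact ⟨q + q', add_mem hq hq', map_add _ q q'⟩

end WeightedSumSq

section SignChange

variable {D : Type*} [Field D] [LinearOrder D] [IsStrictOrderedRing D] {a b : D}

theorem eval_mul_eval_neg_or_of_mul {p q : Polynomial D}
    (h : (p * q).eval a * (p * q).eval b < 0) :
    p.eval a * p.eval b < 0 ∨ q.eval a * q.eval b < 0 := by
  contrapose! h
  rw [Polynomial.eval_mul, Polynomial.eval_mul, mul_mul_mul_comm]
  exact mul_nonneg h.1 h.2

theorem natDegree_ne_zero_of_eval_mul_eval_neg {p : Polynomial D}
    (h : p.eval a * p.eval b < 0) : p.natDegree ≠ 0 := by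
  intro hp
  rw [Polynomial.eq_C_of_natDegree_eq_zero hp, Polynomial.eval_C, Polynomial.eval_C] at h
  exact (mul_self_nonneg _).not_gt h

theorem exists_irreducible_dvd_eval_mul_eval_neg {p : Polynomial D}
    (h : p.eval a * p.eval b < 0) : ∃ f, Irreducible f ∧ f ∣ p ∧ f.eval a * f.eval b < 0 := by
  induction p using WfDvdMonoid.induction_on_irreducible with
  | zero => simp at h
  | unit u hu =>
    exact absurd (Polynomial.natDegree_eq_zero_of_isUnit hu)
      (natDegree_ne_zero_of_eval_mul_eval_neg h)
  | mul p f _ hf ih =>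
    rcases eval_mul_eval_neg_or_of_mul h with h | h
    · exact ⟨f, hf, dvd_mul_right f p, h⟩
    · obtain ⟨f', hf', hdvd, h'⟩ := ih h
      exact ⟨f', hf', hdvd.mul_left f, h'⟩

theorem mem_Ioo_of_irreducible_of_isRoot {f : Polynomial D} (hf : Irreducible f) (hab : a < b)
    (h : f.eval a * f.eval b < 0) {t : D} (ht : f.IsRoot t) : t ∈ Set.Ioo a b := by
  obtain ⟨k, rfl⟩ := Polynomial.dvd_iff_isRoot.2 ht
  have hk : IsUnit k := (hf.isUnit_or_isUnit rfl).resolve_left (Polynomial.not_isUnit_X_sub_C t)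
  rcases eval_mul_eval_neg_or_of_mul h with h | h
  · simp only [Polynomial.eval_sub, Polynomial.eval_X, Polynomial.eval_C] at h
    rcases mul_neg_iff.1 h with h | h
    · exact absurd hab ((sub_neg.1 h.2).trans (sub_pos.1 h.1)).not_gt
    · exact ⟨sub_neg.1 h.1, sub_pos.1 h.2⟩
  · exact absurd (Polynomial.natDegree_eq_zero_of_isUnit hk)
      (natDegree_ne_zero_of_eval_mul_eval_neg h)

variable {F : Type*} [Field F] [Algebra F D] {Q : Subsemiring F}

theorem eval_nonneg_of_mem_weightedSumSq (hQ : ∀ q ∈ Q, 0 ≤ algebraMap F D q) {w : Polynomial D}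
    (hw : w ∈ weightedSumSq Q (⊤ : Subalgebra F (Polynomial D))) (c : D) : 0 ≤ w.eval c := by
  refine weightedSumSq_induction (p := fun w ↦ 0 ≤ w.eval c) ?_ ?_ ?_ hw
  · simp
  · intro q hq s _
    rw [Polynomial.eval_smul, Polynomial.eval_pow, Algebra.smul_def]
    exact mul_nonneg (hQ q hq) (sq_nonneg _)
  · intro v w hv hw
    rw [Polynomial.eval_add]
    exact add_nonneg hv hw

theorem exists_mem_weightedSumSq_natDegree_add_two_le {D : Type*} [Field D] [Algebra F D]
    {f w : Polynomial D} (hf : f.natDegree ≠ 0)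
    (hw : w ∈ weightedSumSq Q (⊤ : Subalgebra F (Polynomial D))) :
    ∃ v ∈ weightedSumSq Q (⊤ : Subalgebra F (Polynomial D)),
      v.natDegree + 2 ≤ 2 * f.natDegree ∧ f ∣ w - v := by
  refine weightedSumSq_induction (p := fun w ↦
    ∃ v ∈ weightedSumSq Q (⊤ : Subalgebra F (Polynomial D)),
      v.natDegree + 2 ≤ 2 * f.natDegree ∧ f ∣ w - v) ⟨0, zero_mem _, ?_, by simp⟩ ?_ ?_ hw
  · rw [Polynomial.natDegree_zero]
    omega
  · intro q hq s _
    refine ⟨q • (s % f) ^ 2, smul_sq_mem_weightedSumSq hq trivial, ?_, ?_⟩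
    · have hs := Polynomial.natDegree_mod_lt s hf
      have hle := (Polynomial.natDegree_smul_le q ((s % f) ^ 2)).trans Polynomial.natDegree_pow_le
      omega
    · rw [← smul_sub, sq_sub_sq, sub_eq_iff_eq_add'.2 (EuclideanDomain.mod_add_div s f).symm]
      exact dvd_smul_of_dvd q ((dvd_mul_right f _).mul_left _)
  · rintro x y ⟨v, hv, hvdeg, hvdvd⟩ ⟨v', hv', hvdeg', hvdvd'⟩
    refine ⟨v + v', add_mem hv hv', ?_, ?_⟩
    · have := Polynomial.natDegree_add_le v v'
      omega
    · rw [add_sub_add_comm]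
      exact dvd_add hvdvd hvdvd'

theorem not_dvd_one_add_of_mem_weightedSumSq (hQ : ∀ q ∈ Q, 0 ≤ algebraMap F D q)
    {f w : Polynomial D} (hf : f.eval a * f.eval b < 0)
    (hw : w ∈ weightedSumSq Q (⊤ : Subalgebra F (Polynomial D))) : ¬ f ∣ 1 + w := by
  induction hn : f.natDegree using Nat.strong_induction_on generalizing f w with | _ n ih
  intro hdvd
  obtain ⟨v, hv, hvdeg, hvdvd⟩ := exists_mem_weightedSumSq_natDegree_add_two_le
    (natDegree_ne_zero_of_eval_mul_eval_neg hf) hw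
  obtain ⟨k, hk⟩ : f ∣ 1 + v := by
    rw [show 1 + v = 1 + w - (w - v) by ring]
    exact dvd_sub hdvd hvdvd
  have hpos (c : D) : 0 < f.eval c * k.eval c := by
    rw [← Polynomial.eval_mul, ← hk, Polynomial.eval_add, Polynomial.eval_one]
    linarith [eval_nonneg_of_mem_weightedSumSq hQ hv c]
  have hkab : k.eval a * k.eval b < 0 := by
    refine (neg_iff_neg_of_mul_pos ?_).1 hf
    rw [mul_mul_mul_comm]
    exact mul_pos (hpos a) (hpos b)
  have hkdeg : f.natDegree + k.natDegree ≤ v.natDegree := by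
    rw [← Polynomial.natDegree_mul, ← hk]
    · exact (Polynomial.natDegree_add_le 1 v).trans (by simp)
    · rintro rfl
      simp at hf
    · rintro rfl
      simp at hkab
  exact ih k.natDegree (by omega) hkab hv rfl (hk ▸ dvd_mul_left k f)

end SignChange

section RealClosure

variable {F C : Type*} [Field F] [Field C] [Algebra F C]

theorem exists_maximal_neg_one_notMem_weightedSumSq (Q : RingPreordering F) :
    ∃ D, Maximal (fun D : IntermediateField F C ↦
      -1 ∉ weightedSumSq Q.toSubsemiring D.toSubalgebra) D := by
  have hbot : -1 ∉ weightedSumSq Q.toSubsemiring (⊥ : IntermediateField F C).toSubalgebra := by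
    intro h
    rw [IntermediateField.bot_toSubalgebra] at h
    obtain ⟨q, hq, hq'⟩ := exists_mem_of_mem_weightedSumSq_bot h
    rw [← map_one (algebraMap F C), ← map_neg, (algebraMap F C).injective.eq_iff] at hq'
    exact Q.neg_one_notMem (hq' ▸ hq)
  refine (zorn_le_nonempty₀ _ (fun c hc hchain D hD ↦ ?_) ⊥ hbot).imp fun _ ↦ And.right
  have hmem {x : C} : x ∈ sSup c ↔ ∃ E ∈ c, x ∈ E := by
    have : Nonempty c := ⟨D, hD⟩
    rw [sSup_eq_iSup', ← SetLike.mem_coe,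
      IntermediateField.coe_iSup_of_directed hchain.directed]
    simp
  refine ⟨sSup c, fun h ↦ ?_, fun E ↦ le_sSup⟩
  have hsup : ∀ x ∈ weightedSumSq Q.toSubsemiring (sSup c).toSubalgebra,
      ∃ E ∈ c, x ∈ weightedSumSq Q.toSubsemiring E.toSubalgebra := by
    intro x
    refine weightedSumSq_induction (p := fun x ↦ ∃ E ∈ c, x ∈ weightedSumSq _ E.toSubalgebra)
      ⟨D, hD, zero_mem _⟩ ?_ ?_
    · intro q hq s hs
      obtain ⟨E, hE, hsE⟩ := hmem.1 hs
      exact ⟨E, hE, smul_sq_mem_weightedSumSq hq hsE⟩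
    · rintro x y ⟨E, hE, hx⟩ ⟨E', hE', hy⟩
      obtain ⟨E'', hE'', hle, hle'⟩ := hchain.directedOn E hE E' hE'
      exact ⟨E'', hE'', add_mem (weightedSumSq_mono hle hx) (weightedSumSq_mono hle' hy)⟩
  obtain ⟨E, hE, hneg⟩ := hsup _ h
  exact hc hE hneg

variable {Q : Subsemiring F} {D : IntermediateField F C}

theorem neg_one_notMem_weightedSumSq_adjoin [LinearOrder D] [IsStrictOrderedRing D]
    (hQ : ∀ q ∈ Q, 0 ≤ algebraMap F D q) {f : Polynomial D} (hf : Irreducible f) {a b : D}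
    (hab : f.eval a * f.eval b < 0) {α : C} (hα : Polynomial.aeval α f = 0) :
    -1 ∉ weightedSumSq Q
      ((IntermediateField.adjoin D {α}).restrictScalars F).toSubalgebra := by
  have halg : IsAlgebraic D α := ⟨f, hf.ne_zero, hα⟩
  have hadjoin : ((IntermediateField.adjoin D {α}).restrictScalars F).toSubalgebra =
      (⊤ : Subalgebra F (Polynomial D)).map ((Polynomial.aeval α).restrictScalars F) := by
    rw [IntermediateField.restrictScalars_toSubalgebra,
      IntermediateField.adjoin_simple_toSubalgebra_of_isAlgebraic halg,
      Algebra.adjoin_singleton_eq_range_aeval]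
    ext x
    simp
  rw [hadjoin, mem_weightedSumSq_map_iff]
  rintro ⟨w, hw, hw'⟩
  refine not_dvd_one_add_of_mem_weightedSumSq hQ hab hw ?_
  have hfmin : f ∣ minpoly D α :=
    (minpoly.irreducible halg.isIntegral).dvd_symm hf (minpoly.dvd D α hα)
  refine hfmin.trans (minpoly.dvd D α ?_)
  rw [map_add, map_one]
  exact add_eq_zero_iff_eq_neg'.2 hw'

theorem hasPolynomialIVT_of_maximal [IsAlgClosed C] [LinearOrder D] [IsStrictOrderedRing D]
    (hD : Maximal (fun D : IntermediateField F C ↦ -1 ∉ weightedSumSq Q D.toSubalgebra) D)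
    (hQ : ∀ q ∈ Q, 0 ≤ algebraMap F D q) : HasPolynomialIVT D := by
  intro p a b hab ha hb
  obtain ⟨f, hf, hfp, hfab⟩ :=
    exists_irreducible_dvd_eval_mul_eval_neg (mul_neg_of_neg_of_pos ha hb)
  obtain ⟨α, hα⟩ := IsAlgClosed.exists_aeval_eq_zero C f hf.degree_pos.ne'
  have hle := hD.2 (neg_one_notMem_weightedSumSq_adjoin hQ hf hfab hα)
    fun x hx ↦ (IntermediateField.adjoin D {α}).algebraMap_mem ⟨x, hx⟩
  have hαD : α ∈ D := hle (IntermediateField.mem_adjoin_simple_self D α)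
  have hroot : f.IsRoot ⟨α, hαD⟩ := (algebraMap D C).injective <| by
    rw [map_zero, ← Polynomial.aeval_algebraMap_apply_eq_algebraMap_eval]
    exact hα
  exact ⟨⟨α, hαD⟩, mem_Ioo_of_irreducible_of_isRoot hf hab hfab hroot, hroot.dvd hfp⟩

end RealClosure

universe u

theorem exists_ringHom_hasPolynomialIVT {F : Type u} [Field F] (Q : RingPreordering F) :
    ∃ (Ω : Type u) (_ : Field Ω) (_ : LinearOrder Ω) (_ : IsStrictOrderedRing Ω) (i : F →+* Ω),
      HasPolynomialIVT Ω ∧ ∀ q ∈ Q, 0 ≤ i q := by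
  obtain ⟨D, hD⟩ := exists_maximal_neg_one_notMem_weightedSumSq (C := AlgebraicClosure F) Q
  let W : RingPreordering D :=
    { toSubsemiring := weightedSumSq Q.toSubsemiring ⊤
      mem_of_isSquare' := by
        rintro _ ⟨x, rfl⟩
        have := smul_sq_mem_weightedSumSq (one_mem Q.toSubsemiring)
          (Algebra.mem_top (R := F) (x := x))
        rwa [one_smul, sq] at this
      neg_one_notMem' := fun h ↦ hD.1 <| by
        have := mem_weightedSumSq_map_iff.2 ⟨-1, h, (map_neg D.val 1).trans (by rw [map_one])⟩
        rwa [Algebra.map_top, IntermediateField.range_val] at this }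
  obtain ⟨O, hWO, hO⟩ := exists_isMax_ringPreordering_ge W
  have := isOrdering_of_isMax hO
  obtain ⟨_, _, hnonneg⟩ := exists_linearOrder_of_isOrdering O
  have hQ (q) (hq : q ∈ Q) : 0 ≤ algebraMap F D q := by
    have := smul_sq_mem_weightedSumSq (Q := Q.toSubsemiring) hq
      (one_mem (⊤ : Subalgebra F D))
    rw [one_pow, ← Algebra.algebraMap_eq_smul_one] at this
    exact (hnonneg _).2 (hWO this)
  exact ⟨D, _, _, ‹_›, algebraMap F D, hasPolynomialIVT_of_maximal hD hQ, hQ⟩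

section Positivstellensatz

theorem exists_ringPreordering_fractionRing {A : Type u} [CommRing A] (P : RingPreordering A)
    [P.IsOrdering] : ∃ (F : Type u) (_ : Field F) (φ : A →+* F) (Q : RingPreordering F),
      ∀ p ∈ P, φ p ∈ Q := by
  let φ : A →+* FractionRing (A ⧸ P.support) :=
    (algebraMap (A ⧸ P.support) _).comp (Ideal.Quotient.mk P.support)
  have hφ {a : A} : φ a = 0 ↔ a ∈ P.support := by
    rw [RingHom.comp_apply, FaithfulSMul.algebraMap_eq_zero_iff, Ideal.Quotient.eq_zero_iff_mem]
  refine ⟨_, inferInstance, φ,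
    .mk' {x | ∃ b, φ b ≠ 0 ∧ ∃ p ∈ P, x * φ b ^ 2 = φ p} ?_ ?_ ?_ ?_,
    fun p hp ↦ ⟨1, by simp, p, hp, by simp⟩⟩
  · rintro x y ⟨b, hb, p, hp, hx⟩ ⟨c, hc, q, hq, hy⟩
    refine ⟨b * c, by simp [hb, hc], p * c ^ 2 + q * b ^ 2,
      add_mem (mul_mem hp (P.pow_two_mem c)) (mul_mem hq (P.pow_two_mem b)), ?_⟩
    simp only [map_add, map_mul, map_pow, ← hx, ← hy]
    ring
  · rintro x y ⟨b, hb, p, hp, hx⟩ ⟨c, hc, q, hq, hy⟩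
    refine ⟨b * c, by simp [hb, hc], p * q, mul_mem hp hq, ?_⟩
    simp only [map_mul, ← hx, ← hy]
    ring
  · intro x
    obtain ⟨a', b', hb', rfl⟩ := IsFractionRing.div_surjective (A := A ⧸ P.support) x
    obtain ⟨a, rfl⟩ := Ideal.Quotient.mk_surjective a'
    obtain ⟨b, rfl⟩ := Ideal.Quotient.mk_surjective b'
    have hb : φ b ≠ 0 := by simpa [φ] using nonZeroDivisors.ne_zero hb'
    refine ⟨b, hb, a ^ 2, P.pow_two_mem a, ?_⟩
    change φ a / φ b * (φ a / φ b) * φ b ^ 2 = _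
    rw [map_pow]
    field_simp
  · rintro ⟨b, hb, p, hp, hneg⟩
    have hsupp : p + b ^ 2 ∈ P.support := hφ.1 (by rw [map_add, map_pow, ← hneg]; ring)
    have hb2 : b ^ 2 ∈ P.support := ⟨P.pow_two_mem b, by
      have := add_mem hp hsupp.2
      rwa [neg_add, add_neg_cancel_left] at this⟩
    exact hb (hφ.2 (Ideal.IsPrime.mem_of_pow_mem inferInstance 2 hb2))

theorem exists_ringHom_nonneg_of_ringPreordering {A : Type u} [CommRing A] (P : RingPreordering A) :
    ∃ (Ω : Type u) (_ : Field Ω) (_ : LinearOrder Ω) (_ : IsStrictOrderedRing Ω) (φ : A →+* Ω),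
      HasPolynomialIVT Ω ∧ ∀ p ∈ P, 0 ≤ φ p := by
  obtain ⟨O, hPO, hO⟩ := exists_isMax_ringPreordering_ge P
  have := isOrdering_of_isMax hO
  obtain ⟨F, _, φ, Q, hφ⟩ := exists_ringPreordering_fractionRing O
  obtain ⟨Ω, _, _, _, i, hΩ, hi⟩ := exists_ringHom_hasPolynomialIVT Q
  exact ⟨Ω, _, _, ‹_›, i.comp φ, hΩ, fun p hp ↦ hi _ (hφ p (hPO hp))⟩

variable {R : Type*} [Field R] [LinearOrder R] [IsStrictOrderedRing R] {n : ℕ}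

theorem exists_eval_nonneg_of_ringPreordering (hR : HasPolynomialIVT R)
    (P : RingPreordering (MvPolynomial (Fin n) R)) (A : Finset (MvPolynomial (Fin n) R))
    (hA : ∀ p ∈ A, p ∈ P) : ∃ y, ∀ p ∈ A, 0 ≤ eval y p := by
  obtain ⟨Ω, _, _, _, φ, hΩ, hφ⟩ := exists_ringHom_nonneg_of_ringPreordering P
  obtain ⟨y, hy⟩ := exists_forall_mem_sign_eval_eq hR hΩ (φ.comp C) (φ ∘ X) A
  refine ⟨y, fun p hp ↦ ?_⟩
  have heval : eval₂ (φ.comp C) (φ ∘ X) p = φ p := by rw [← eval₂_comp_left, eval₂_eta]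
  rw [← sign_nonneg_iff, ← hy p hp, heval, sign_nonneg_iff]
  exact hφ p (hA p hp)

theorem exists_mul_eq_one_add_of_forall_eval_pos (hR : HasPolynomialIVT R)
    (G : Finset (MvPolynomial (Fin n) R)) {f : MvPolynomial (Fin n) R}
    (hf : ∀ y, (∀ g ∈ G, 0 ≤ eval y g) → 0 < eval y f) :
    ∃ s ∈ generatedPreordering (G : Set (MvPolynomial (Fin n) R)),
      ∃ t ∈ generatedPreordering (G : Set (MvPolynomial (Fin n) R)), f * t = 1 + s := by
  classical
  set T := generatedPreordering (G : Set (MvPolynomial (Fin n) R))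
  have hT := mem_generatedPreordering_of_isSquare (G : Set (MvPolynomial (Fin n) R))
  by_cases hneg : -1 ∈ T ⊔ Subsemiring.closure {-f}
  · obtain ⟨s, hs, t, ht, h⟩ := (mem_sup_closure_singleton_iff hT).1 hneg
    exact ⟨s, hs, t, ht, by linear_combination h⟩
  · let P : RingPreordering (MvPolynomial (Fin n) R) :=
      { toSubsemiring := T ⊔ Subsemiring.closure {-f}
        mem_of_isSquare' := fun hx ↦ le_sup_left (a := T) (hT _ hx)
        neg_one_notMem' := hneg }
    obtain ⟨y, hy⟩ := exists_eval_nonneg_of_ringPreordering hR P (insert (-f) G) <| by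
      rw [Finset.forall_mem_insert]
      exact ⟨le_sup_right (a := T) (Subsemiring.mem_closure_of_mem rfl),
        fun g hg ↦ le_sup_left (a := T) (subset_generatedPreordering _ hg)⟩
    rw [Finset.forall_mem_insert, map_neg, neg_nonneg] at hy
    exact absurd (hf y hy.2) hy.1.not_gt

end Positivstellensatz

section Archimedean

variable {A : Type*} [CommRing A] [Algebra ℝ A] {P : Subsemiring A}

theorem smul_mem_of_nonneg (hP : ∀ x, IsSquare x → x ∈ P) {r : ℝ} (hr : 0 ≤ r) {a : A}
    (ha : a ∈ P) : r • a ∈ P := by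
  have hsqrt : algebraMap ℝ A r ∈ P :=
    hP _ ⟨algebraMap ℝ A √r, by rw [← map_mul, Real.mul_self_sqrt hr]⟩
  rw [Algebra.smul_def]
  exact mul_mem hsqrt ha

theorem algebraMap_mem_of_nonneg (hP : ∀ x, IsSquare x → x ∈ P) {r : ℝ} (hr : 0 ≤ r) :
    algebraMap ℝ A r ∈ P := by
  rw [Algebra.algebraMap_eq_smul_one]
  exact smul_mem_of_nonneg hP hr (one_mem P)

theorem algebraMap_add_mem_of_le (hP : ∀ x, IsSquare x → x ∈ P) {r r' : ℝ} (hr : r ≤ r') {a : A}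
    (ha : algebraMap ℝ A r + a ∈ P) : algebraMap ℝ A r' + a ∈ P := by
  convert add_mem (algebraMap_mem_of_nonneg hP (sub_nonneg.2 hr)) ha using 1
  algebra

/-- The subalgebra of elements `a` with `m - a` and `m + a` in `P` for some real number `m`, where
`P` is a subsemiring containing all squares. The semiring `P` is archimedean when this is `⊤`. -/
def boundedSubalgebra (P : Subsemiring A) (hP : ∀ x, IsSquare x → x ∈ P) : Subalgebra ℝ A where
  carrier := {a | ∃ m : ℝ, algebraMap ℝ A m - a ∈ P ∧ algebraMap ℝ A m + a ∈ P}
  algebraMap_mem' r := by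
    refine ⟨|r|, ?_, ?_⟩
    · rw [← map_sub]
      exact algebraMap_mem_of_nonneg hP (sub_nonneg.2 (le_abs_self r))
    · rw [← map_add]
      exact algebraMap_mem_of_nonneg hP (by linarith [neg_abs_le r])
  add_mem' := by
    rintro a b ⟨m, hma, hma'⟩ ⟨k, hkb, hkb'⟩
    refine ⟨m + k, ?_, ?_⟩
    · convert add_mem hma hkb using 1
      algebra
    · convert add_mem hma' hkb' using 1
      algebra
  mul_mem' := by
    rintro a b ⟨m, hma, hma'⟩ ⟨k, hkb, hkb'⟩
    refine ⟨m * k, ?_, ?_⟩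
    · convert smul_mem_of_nonneg hP (r := 1 / 2) (by norm_num)
        (add_mem (mul_mem hma hkb') (mul_mem hma' hkb)) using 1
      algebra
    · convert smul_mem_of_nonneg hP (r := 1 / 2) (by norm_num)
        (add_mem (mul_mem hma hkb) (mul_mem hma' hkb')) using 1
      algebra

theorem mem_boundedSubalgebra_of_sub_sq_mem (hP : ∀ x, IsSquare x → x ∈ P) {N : ℝ} {a : A}
    (ha : algebraMap ℝ A N - a ^ 2 ∈ P) : a ∈ boundedSubalgebra P hP := by
  refine ⟨N + 1 / 4, ?_, ?_⟩
  · convert add_mem ha (hP _ (IsSquare.sq (a - algebraMap ℝ A (1 / 2)))) using 1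
    algebra
  · convert add_mem ha (hP _ (IsSquare.sq (a + algebraMap ℝ A (1 / 2)))) using 1
    algebra

theorem boundedSubalgebra_eq_top {σ : Type*} [Fintype σ] {P : Subsemiring (MvPolynomial σ ℝ)}
    (hP : ∀ x, IsSquare x → x ∈ P) {N : ℝ} (hN : C N - ∑ i, X i ^ 2 ∈ P) :
    boundedSubalgebra P hP = ⊤ := by
  classical
  rw [← top_le_iff, ← adjoin_range_X, Algebra.adjoin_le_iff, Set.range_subset_iff]
  intro i
  have hrest : ∑ k ∈ Finset.univ.erase i, X k ^ 2 ∈ P := sum_mem fun k _ ↦ hP _ (IsSquare.sq _)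
  refine mem_boundedSubalgebra_of_sub_sq_mem hP (N := N) ?_
  convert add_mem hN hrest using 1
  rw [← Finset.add_sum_erase _ _ (Finset.mem_univ i), algebraMap_eq]
  ring

theorem exists_algebraMap_sub_mem_of_mul_eq (hP : ∀ x, IsSquare x → x ∈ P) {N m : ℝ} (hN : 0 ≤ N)
    {ρ s t : A} (hρ : ρ ∈ P) (hs : s ∈ P) (ht : t ∈ P)
    (hst : (algebraMap ℝ A N - ρ) * t = 1 + s)
    (hm : algebraMap ℝ A m - s ∈ P ⊔ Subsemiring.closure {algebraMap ℝ A N - ρ}) :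
    ∃ M : ℝ, algebraMap ℝ A M - ρ ∈ P := by
  obtain ⟨a, ha, b, hb, hab⟩ := (mem_sup_closure_singleton_iff hP).1 hm
  have hmul : (algebraMap ℝ A N - ρ) * (1 + s) ∈ P := by
    rw [← hst, ← mul_assoc]
    exact mul_mem (hP _ ⟨_, rfl⟩) ht
  have hlin : algebraMap ℝ A N - ρ + N • s ∈ P := by
    convert add_mem hmul (mul_mem hs hρ) using 1
    algebra
  have hquad : (algebraMap ℝ A m - s) * (1 + s) ∈ P := by
    rw [hab]
    convert add_mem (mul_mem ha (add_mem (one_mem P) hs)) (mul_mem hmul hb) using 1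
    ring
  have hs_bdd : algebraMap ℝ A (m + m ^ 2 / 4) - s ∈ P := by
    convert add_mem hquad (hP _ (IsSquare.sq (algebraMap ℝ A (m / 2) - s))) using 1
    algebra
  refine ⟨N * (m + m ^ 2 / 4) + N, ?_⟩
  convert add_mem (smul_mem_of_nonneg hP hN hs_bdd) hlin using 1
  algebra

theorem algebraMap_sub_inv_add_mem (hP : ∀ x, IsSquare x → x ∈ P) {f s t : A} (hs : s ∈ P)
    (ht : t ∈ P) (hst : f * t = 1 + s) {k r : ℝ} (hk : 0 < k) (hkt : algebraMap ℝ A k - t ∈ P)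
    (hr : 0 ≤ r) (hrf : algebraMap ℝ A r + f ∈ P) : algebraMap ℝ A (r - k⁻¹) + f ∈ P := by
  convert smul_mem_of_nonneg hP (inv_nonneg.2 hk.le) (add_mem (mul_mem hkt hrf)
    (add_mem hs (smul_mem_of_nonneg hP hr ht))) using 1
  have hk' : k⁻¹ • algebraMap ℝ A k = 1 := by
    rw [Algebra.smul_def, ← map_mul, inv_mul_cancel₀ hk.ne', map_one]
  have hs' : s = f * t - 1 := by rw [hst]; ring
  calc algebraMap ℝ A (r - k⁻¹) + f
      = (k⁻¹ • algebraMap ℝ A k) * (algebraMap ℝ A r + f) - algebraMap ℝ A k⁻¹ := by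
        rw [hk', map_sub]; ring
    _ = _ := by rw [hs']; algebra

theorem mem_of_mul_eq_one_add (hP : ∀ x, IsSquare x → x ∈ P) {f s t : A} (hs : s ∈ P) (ht : t ∈ P)
    (hst : f * t = 1 + s) (hf_bdd : f ∈ boundedSubalgebra P hP)
    (ht_bdd : t ∈ boundedSubalgebra P hP) : f ∈ P := by
  obtain ⟨r, -, hr⟩ := hf_bdd
  obtain ⟨k₀, hk₀, -⟩ := ht_bdd
  obtain ⟨k, hk, hkt⟩ : ∃ k : ℝ, 0 < k ∧ algebraMap ℝ A k - t ∈ P := by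
    refine ⟨max k₀ 1, by positivity, ?_⟩
    rw [sub_eq_add_neg] at hk₀ ⊢
    exact algebraMap_add_mem_of_le hP (le_max_left _ _) hk₀
  have hstep (q : ℕ) : algebraMap ℝ A (max (r - q * k⁻¹) 0) + f ∈ P := by
    induction q with
    | zero => exact algebraMap_add_mem_of_le hP (by simp) hr
    | succ q ih =>
      refine algebraMap_add_mem_of_le hP ?_
        (algebraMap_sub_inv_add_mem hP hs ht hst hk hkt (le_max_right _ _) ih)
      have : 0 < k⁻¹ := inv_pos.2 hk
      push_cast
      rw [← max_sub_sub_right]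
      exact max_le_max (by linarith) (by linarith)
  obtain ⟨q, hq⟩ := exists_nat_ge (r * k)
  have hq' : r - q * k⁻¹ ≤ 0 := by
    rw [sub_nonpos, ← div_eq_mul_inv, le_div_iff₀ hk]
    exact hq
  simpa [max_eq_right hq'] using hstep q

end Archimedean

section PositivePolynomial

variable {n : ℕ}

theorem exists_forall_eval_sum_X_sq_lt {S : Set (Fin n → ℝ)} (hS : Bornology.IsBounded S) :
    ∃ N : ℝ, 0 ≤ N ∧ ∀ y ∈ S, eval y (∑ i, X i ^ 2) < N := by
  obtain ⟨r, hr⟩ := hS.exists_norm_le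
  refine ⟨n * r ^ 2 + 1, by positivity, fun y hy ↦ ?_⟩
  have hyr (i : Fin n) : y i ^ 2 ≤ r ^ 2 :=
    sq_le_sq.2 (((norm_le_pi_norm y i).trans (hr y hy)).trans (le_abs_self r))
  calc eval y (∑ i, X i ^ 2) = ∑ i, y i ^ 2 := by simp
    _ ≤ ∑ _i : Fin n, r ^ 2 := Finset.sum_le_sum fun i _ ↦ hyr i
    _ < n * r ^ 2 + 1 := by simp

theorem exists_C_sub_sum_X_sq_mem_generatedPreordering (G : Finset (MvPolynomial (Fin n) ℝ))
    (hG : Bornology.IsBounded {y | ∀ g ∈ G, 0 ≤ eval y g}) :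
    ∃ N : ℝ, C N - ∑ i, X i ^ 2 ∈
      generatedPreordering (G : Set (MvPolynomial (Fin n) ℝ)) := by
  set T := generatedPreordering (G : Set (MvPolynomial (Fin n) ℝ))
  have hT := mem_generatedPreordering_of_isSquare (G : Set (MvPolynomial (Fin n) ℝ))
  set ρ : MvPolynomial (Fin n) ℝ := ∑ i, X i ^ 2
  obtain ⟨N, hN, hNρ⟩ := exists_forall_eval_sum_X_sq_lt hG
  obtain ⟨s, hs, t, ht, hst⟩ := exists_mul_eq_one_add_of_forall_eval_pos hasPolynomialIVT_real G
    (f := C N - ρ) fun y hy ↦ by rw [map_sub, eval_C, sub_pos]; exact hNρ y hy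
  have hT' (x : MvPolynomial (Fin n) ℝ) (hx : IsSquare x) :
      x ∈ T ⊔ Subsemiring.closure {C N - ρ} := le_sup_left (a := T) (hT x hx)
  have hs_bdd : s ∈ boundedSubalgebra _ hT' :=
    boundedSubalgebra_eq_top hT' (le_sup_right (a := T) (Subsemiring.mem_closure_of_mem rfl)) ▸
      Algebra.mem_top
  obtain ⟨m, hm, -⟩ := hs_bdd
  exact exists_algebraMap_sub_mem_of_mul_eq hT hN (sum_mem fun i _ ↦ hT _ (IsSquare.sq _))
    hs ht hst hm

theorem mem_generatedPreordering_of_forall_eval_pos (G : Finset (MvPolynomial (Fin n) ℝ))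
    (hG : Bornology.IsBounded {y | ∀ g ∈ G, 0 ≤ eval y g}) {f : MvPolynomial (Fin n) ℝ}
    (hf : ∀ y, (∀ g ∈ G, 0 ≤ eval y g) → 0 < eval y f) :
    f ∈ generatedPreordering (G : Set (MvPolynomial (Fin n) ℝ)) := by
  obtain ⟨N, hN⟩ := exists_C_sub_sum_X_sq_mem_generatedPreordering G hG
  obtain ⟨s, hs, t, ht, hst⟩ := exists_mul_eq_one_add_of_forall_eval_pos hasPolynomialIVT_real G hf
  have hT := mem_generatedPreordering_of_isSquare (G : Set (MvPolynomial (Fin n) ℝ))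
  have hbdd := boundedSubalgebra_eq_top hT hN
  exact mem_of_mul_eq_one_add hT hs ht hst (hbdd ▸ Algebra.mem_top) (hbdd ▸ Algebra.mem_top)

end PositivePolynomial

section PositiveFunctional

theorem apply_mul_nonneg_of_isSumSq {A M F : Type*} [CommRing A] [AddCommMonoid M] [Preorder M]
    [AddLeftMono M] [FunLike F A M] [AddMonoidHomClass F A M] {L : F} {a : A}
    (hL : ∀ p, 0 ≤ L (a * p ^ 2)) {s : A} (hs : IsSumSq s) : 0 ≤ L (a * s) := by
  induction hs with
  | zero => simp
  | sq_add p _ ih =>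
    rw [mul_add, map_add, ← sq]
    exact add_nonneg (hL p) ih

theorem apply_nonneg_of_mem_generatedPreordering_singleton {A M F ι : Type*} [CommRing A]
    [AddCommMonoid M] [Preorder M] [AddLeftMono M] [FunLike F A M] [AddMonoidHomClass F A M]
    [Fintype ι] {L : F} (hL : ∀ p, 0 ≤ L (p ^ 2)) {g : ι → A}
    (hLg : ∀ j p, 0 ≤ L (g j * p ^ 2)) {σ₀ : A} {σ : ι → A} (hσ₀ : IsSumSq σ₀)
    (hσ : ∀ j, IsSumSq (σ j)) {f : A}
    (hf : f ∈ generatedPreordering {σ₀ + ∑ j, σ j * g j}) : 0 ≤ L f := by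
  obtain ⟨s, hs, t, ht, rfl⟩ := (mem_sup_closure_singleton_iff
    fun x hx ↦ Subsemiring.mem_sumSq.2 hx.isSumSq).1 hf
  rw [Subsemiring.mem_sumSq] at hs ht
  have hexpand : s + (σ₀ + ∑ j, σ j * g j) * t = 1 * (s + σ₀ * t) + ∑ j, g j * (σ j * t) := by
    rw [add_mul, Finset.sum_mul, one_mul, add_assoc]
    simp only [mul_comm, mul_left_comm]
  rw [hexpand, map_add, map_sum]
  exact add_nonneg (apply_mul_nonneg_of_isSumSq (by simpa using hL) (hs.add (hσ₀.mul ht)))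
    (Finset.sum_nonneg fun j _ ↦ apply_mul_nonneg_of_isSumSq (hLg j) ((hσ j).mul ht))

theorem apply_nonneg_of_forall_eval_nonneg {n : ℕ} {G : Finset (MvPolynomial (Fin n) ℝ)}
    (hG : Bornology.IsBounded {y | ∀ g ∈ G, 0 ≤ eval y g})
    {L : MvPolynomial (Fin n) ℝ →ₗ[ℝ] ℝ}
    (hL : ∀ f ∈ generatedPreordering (G : Set (MvPolynomial (Fin n) ℝ)), 0 ≤ L f)
    {f : MvPolynomial (Fin n) ℝ} (hf : ∀ y, (∀ g ∈ G, 0 ≤ eval y g) → 0 ≤ eval y f) :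
    0 ≤ L f := by
  have hperturb (ε : ℝ) (hε : 0 < ε) : 0 ≤ L (f + ε • 1) :=
    hL _ <| mem_generatedPreordering_of_forall_eval_pos G hG fun y hy ↦ by
      simpa using add_pos_of_nonneg_of_pos (hf y hy) hε
  have hlim : Filter.Tendsto (fun ε : ℝ ↦ L (f + ε • 1)) (nhdsWithin 0 (Set.Ioi 0))
      (nhds (L f)) := by
    have hcont : Continuous fun ε : ℝ ↦ L f + ε * L 1 := by fun_prop
    simpa using (hcont.tendsto 0).mono_left nhdsWithin_le_nhds
  exact ge_of_tendsto hlim (eventually_mem_nhdsWithin.mono hperturb)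

end PositiveFunctional

section Measure

theorem exists_positive_extension {V E : Type*} [AddCommGroup V] [Module ℝ V] [AddCommGroup E]
    [PartialOrder E] [IsOrderedAddMonoid E] [Module ℝ E] [PosSMulMono ℝ E] (ρ : V →ₗ[ℝ] E)
    (hρ : ∀ y, ∃ v, 0 ≤ ρ v + y) (L : V →ₗ[ℝ] ℝ) (hL : ∀ v, 0 ≤ ρ v → 0 ≤ L v) :
    ∃ Λ : E →ₗ[ℝ] ℝ, (∀ v, Λ (ρ v) = L v) ∧ ∀ y, 0 ≤ y → 0 ≤ Λ y := by
  obtain ⟨τ, hτ⟩ := ρ.rangeRestrict.exists_rightInverse_of_surjective ρ.range_rangeRestrict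
  have hρτ (y : ρ.range) : ρ (τ y) = y := congrArg Subtype.val (LinearMap.congr_fun hτ y)
  have hLτ (v : V) : L (τ (ρ.rangeRestrict v)) = L v := by
    have hzero : ρ (τ (ρ.rangeRestrict v) - v) = 0 := by
      rw [map_sub, hρτ, sub_eq_zero]
      rfl
    have hle := hL _ hzero.ge
    have hge := hL (-(τ (ρ.rangeRestrict v) - v)) (by rw [map_neg, hzero, neg_zero])
    rw [map_neg, map_sub] at hge
    rw [map_sub] at hle
    linarith
  obtain ⟨Λ, hΛ, hΛ_nonneg⟩ := riesz_extension (PointedCone.positive ℝ E) ⟨ρ.range, L ∘ₗ τ⟩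
    (fun y hy ↦ hL _ (by rwa [hρτ])) fun y ↦
      (hρ y).imp' ρ.rangeRestrict fun v hv ↦ hv
  exact ⟨Λ, fun v ↦ (hΛ (ρ.rangeRestrict v)).trans (hLτ v), hΛ_nonneg⟩

section CompactSpace

variable {X : Type*} [TopologicalSpace X] [CompactSpace X] [MeasurableSpace X] [BorelSpace X]

theorem exists_measure_integral_eq [T2Space X] (Λ : C(X, ℝ) →ₗ[ℝ] ℝ) (hΛ : ∀ φ, 0 ≤ φ → 0 ≤ Λ φ) :
    ∃ ν : Measure X, IsFiniteMeasure ν ∧ ∀ φ : C(X, ℝ), ∫ x, φ x ∂ν = Λ φ := by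
  let Λ₀ : CompactlySupportedContinuousMap X ℝ →ₗ[ℝ] ℝ :=
    { toFun φ := Λ φ.toContinuousMap
      map_add' φ ψ := Λ.map_add φ.toContinuousMap ψ.toContinuousMap
      map_smul' c φ := Λ.map_smul c φ.toContinuousMap }
  let Λ₁ := PositiveLinearMap.mk₀ Λ₀ fun φ hφ ↦
    hΛ _ fun x ↦ CompactlySupportedContinuousMap.le_def.1 hφ x
  exact ⟨RealRMK.rieszMeasure Λ₁, inferInstance, fun φ ↦ RealRMK.integral_rieszMeasure Λ₁
    (CompactlySupportedContinuousMap.continuousMapEquiv φ)⟩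

variable {ν : Measure X} [IsFiniteMeasure ν]

theorem continuous_integral_continuousMap : Continuous fun φ : C(X, ℝ) ↦ ∫ x, φ x ∂ν := by
  have h := continuous_integral.comp (ContinuousMap.toLp (E := ℝ) 1 ν ℝ).continuous
  exact h.congr fun φ ↦ integral_congr_ae (ContinuousMap.coeFn_toLp ν φ)

theorem ae_nonneg_of_forall_integral_mul_sq_nonneg {D : Set C(X, ℝ)} (hD : Dense D) (h : C(X, ℝ))
    (hint_mem : ∀ φ ∈ D, 0 ≤ ∫ x, (h * φ ^ 2) x ∂ν) : ∀ᵐ x ∂ν, 0 ≤ h x := by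
  have hint_all (φ : C(X, ℝ)) : 0 ≤ ∫ x, (h * φ ^ 2) x ∂ν := by
    have hclosed : IsClosed {φ : C(X, ℝ) | 0 ≤ ∫ x, (h * φ ^ 2) x ∂ν} :=
      isClosed_le continuous_const (continuous_integral_continuousMap.comp (by fun_prop))
    exact hclosed.closure_subset_iff.2 hint_mem (hD φ)
  let w : C(X, ℝ) := ⟨fun x ↦ max (-h x) 0, by fun_prop⟩
  let φ : C(X, ℝ) := ⟨fun x ↦ √(w x), by fun_prop⟩
  have hw (x : X) : (h * φ ^ 2) x = -(w x ^ 2) := by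
    change h x * √(max (-h x) 0) ^ 2 = -(max (-h x) 0) ^ 2
    rw [Real.sq_sqrt (le_max_right _ _)]
    rcases le_total (-h x) 0 with hx | hx
    · rw [max_eq_right hx]; ring
    · rw [max_eq_left hx]; ring
  have hw_int : ∫ x, w x ^ 2 ∂ν = 0 := by
    refine le_antisymm ?_ (integral_nonneg fun x ↦ sq_nonneg (w x))
    have hneg := hint_all φ
    rwa [integral_congr_ae (.of_forall hw), integral_neg, neg_nonneg] at hneg
  rw [integral_eq_zero_iff_of_nonneg (fun x ↦ sq_nonneg (w x))
    ((w ^ 2).continuous.integrable_of_hasCompactSupport (.of_compactSpace _))] at hw_int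
  filter_upwards [hw_int] with x hx
  exact neg_nonpos.1 (max_eq_right_iff.1 (pow_eq_zero_iff two_ne_zero |>.1 hx))

end CompactSpace

section Polynomial

variable {σ : Type*}

/-- The restriction of real polynomials to continuous functions on `S`. -/
noncomputable def restrictPolynomial (S : Set (σ → ℝ)) : MvPolynomial σ ℝ →ₐ[ℝ] C(S, ℝ) :=
  aeval fun i ↦ ⟨fun x ↦ x.1 i, (continuous_apply i).comp continuous_subtype_val⟩

theorem restrictPolynomial_apply (S : Set (σ → ℝ)) (p : MvPolynomial σ ℝ) (x : S) :
    restrictPolynomial S p x = eval x.1 p := by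
  have h : (ContinuousMap.evalAlgHom ℝ ℝ x).comp (restrictPolynomial S) = aeval x.1 := by
    ext i
    simp [restrictPolynomial]
  simpa [aeval_eq_eval] using DFunLike.congr_fun h p

variable (S : Set (σ → ℝ)) [CompactSpace S]

theorem denseRange_restrictPolynomial : DenseRange (restrictPolynomial S) := by
  have hsep : (restrictPolynomial S).range.SeparatesPoints := fun x y hxy ↦ by
    obtain ⟨i, hi⟩ := Function.ne_iff.1 (Subtype.val_injective.ne hxy)
    exact ⟨_, ⟨restrictPolynomial S (X i), ⟨X i, rfl⟩, rfl⟩, by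
      simpa only [restrictPolynomial_apply, eval_X] using hi⟩
  have htop := ContinuousMap.subalgebra_topologicalClosure_eq_top_of_separatesPoints _ hsep
  rw [DenseRange, dense_iff_closure_eq]
  exact congrArg SetLike.coe htop

variable [BorelSpace S]

theorem exists_measure_apply_eq_integral_eval (L : MvPolynomial σ ℝ →ₗ[ℝ] ℝ)
    (hL : ∀ f, (∀ y ∈ S, 0 ≤ eval y f) → 0 ≤ L f) :
    ∃ ν : Measure S, IsFiniteMeasure ν ∧ ∀ f, L f = ∫ x, eval x.1 f ∂ν := by
  have hdom (φ : C(S, ℝ)) : ∃ p, 0 ≤ (restrictPolynomial S).toLinearMap p + φ := by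
    refine ⟨C ‖φ‖, fun x ↦ ?_⟩
    change 0 ≤ restrictPolynomial S (C ‖φ‖) x + φ x
    rw [restrictPolynomial_apply, eval_C]
    linarith [neg_le_of_abs_le (φ.norm_coe_le_norm x)]
  obtain ⟨Λ, hΛL, hΛ⟩ := exists_positive_extension (restrictPolynomial S).toLinearMap hdom L
    fun f hf ↦ hL f fun y hy ↦ restrictPolynomial_apply S f ⟨y, hy⟩ ▸ hf ⟨y, hy⟩
  obtain ⟨ν, hν, hνΛ⟩ := exists_measure_integral_eq Λ hΛ
  refine ⟨ν, hν, fun f ↦ ?_⟩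
  rw [← hΛL, ← hνΛ]
  simp only [AlgHom.toLinearMap_apply, restrictPolynomial_apply]

theorem ae_eval_nonneg_of_forall_integral_mul_sq_nonneg {ν : Measure S} [IsFiniteMeasure ν]
    (g : MvPolynomial σ ℝ) (hg : ∀ p, 0 ≤ ∫ x : S, eval x.1 (g * p ^ 2) ∂ν) :
    ∀ᵐ x : S ∂ν, 0 ≤ eval x.1 g := by
  simp only [← restrictPolynomial_apply] at hg ⊢
  refine ae_nonneg_of_forall_integral_mul_sq_nonneg (denseRange_restrictPolynomial S) _ ?_
  rintro _ ⟨p, rfl⟩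
  simpa only [map_mul, map_pow] using hg p

end Polynomial

theorem isClosed_setOf_forall_eval_nonneg {σ ι : Type*} (g : ι → MvPolynomial σ ℝ) :
    IsClosed {x : σ → ℝ | ∀ j, 0 ≤ eval x (g j)} := by
  rw [Set.ofPred_forall]
  exact isClosed_iInter fun j ↦ isClosed_le continuous_const (continuous_eval _)

theorem measureSupport_subset_of_ae_mem {n : ℕ} {μ : Measure (Fin n → ℝ)} {K : Set (Fin n → ℝ)}
    (hK : IsClosed K) (hμ : ∀ᵐ x ∂μ, x ∈ K) : measureSupport μ ⊆ K :=
  Set.sInter_subset_of_mem ⟨hK, hμ⟩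

end Measure

theorem stmt_14 {n l : ℕ} (g : Fin l → MvPolynomial (Fin n) ℝ)
    (K : Set (Fin n → ℝ)) (hKdef : K = {x : Fin n → ℝ | ∀ j, 0 ≤ eval x (g j)})
    (hPut : PutinarProperty g)
    (L : MvPolynomial (Fin n) ℝ →ₗ[ℝ] ℝ)
    (hL0 : ∀ p : MvPolynomial (Fin n) ℝ, 0 ≤ L (p ^ 2))
    (hLg : ∀ j, ∀ p : MvPolynomial (Fin n) ℝ, 0 ≤ L (g j * p ^ 2)) :
    ∃ μ : Measure (Fin n → ℝ), IsFiniteMeasure μ ∧ measureSupport μ ⊆ K ∧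
      ∀ f : MvPolynomial (Fin n) ℝ, L f = ∫ x, eval x f ∂μ := by
  obtain ⟨σ₀, σ, hσ₀, hσ, hcompact⟩ := hPut
  set S := {x : Fin n → ℝ | 0 ≤ eval x (σ₀ + ∑ j, σ j * g j)}
  have hL_nonneg (f : MvPolynomial (Fin n) ℝ) (hf : ∀ y ∈ S, 0 ≤ eval y f) : 0 ≤ L f := by
    refine apply_nonneg_of_forall_eval_nonneg (G := {σ₀ + ∑ j, σ j * g j}) ?_ (fun p hp ↦ ?_) ?_
    · simpa only [Finset.mem_singleton, forall_eq] using hcompact.isBounded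
    · rw [Finset.coe_singleton] at hp
      exact apply_nonneg_of_mem_generatedPreordering_singleton hL0 hLg hσ₀ hσ hp
    · exact fun y hy ↦ hf y (hy _ (Finset.mem_singleton_self _))
  have : CompactSpace S := isCompact_iff_compactSpace.1 hcompact
  obtain ⟨ν, hν, hLν⟩ := exists_measure_apply_eq_integral_eval S L hL_nonneg
  have hemb : MeasurableEmbedding (Subtype.val : S → Fin n → ℝ) :=
    .subtype_coe hcompact.measurableSet
  have hK_closed : IsClosed K := hKdef ▸ isClosed_setOf_forall_eval_nonneg g
  have hν_mem : ∀ᵐ x : S ∂ν, x.1 ∈ K := by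
    rw [hKdef]
    exact ae_all_iff.2 fun j ↦ ae_eval_nonneg_of_forall_integral_mul_sq_nonneg S (g j) fun p ↦
      hLν _ ▸ hLg j p
  exact ⟨ν.map Subtype.val, inferInstance,
    measureSupport_subset_of_ae_mem hK_closed (hemb.ae_map_iff.2 hν_mem),
    fun f ↦ (hLν f).trans (hemb.integral_map fun x ↦ eval x f).symm⟩
end

section
/- For each d ∈ ℕ let V_d = inf { ∫_B P dvol : P is a d-feasible polynomial } (the infimum is over a nonempty set since the constant polynomial 1 is d-feasible). Then lim_{d→∞} V_d = vol(K). -/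
open MeasureTheory MvPolynomial Filter

/-- A real polynomial `P` in `n` variables is `d`-feasible (w.r.t. `B`, `K`) if its total
degree is at most `d`, `P ≥ 0` on `B` and `P ≥ 1` on `K`. -/
def Feasible {n : ℕ} (B K : Set (Fin n → ℝ)) (d : ℕ) (P : MvPolynomial (Fin n) ℝ) : Prop :=
  P.totalDegree ≤ d ∧ (∀ x ∈ B, 0 ≤ eval x P) ∧ (∀ x ∈ K, 1 ≤ eval x P)

/-!
By Markov's inequality, `μ (K ∩ B)` bounds the integral over `B` of every feasible polynomial from
below. Conversely, the indicator of the closed set `K` is a decreasing limit of continuous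
functions, so some continuous `f ≥ 0` with `f ≥ 1` on `K` has integral over `B` close to
`μ (K ∩ B)`; by Stone–Weierstrass some polynomial lies slightly above `f` on the compact set
`B ∪ K`, hence is feasible with almost the same integral.
-/

section PolynomialApproximation

variable {σ : Type*} {s t : Set (σ → ℝ)} {f : (σ → ℝ) → ℝ} {ε : ℝ}

/-- The polynomial functions, as the subalgebra of `C(σ → ℝ, ℝ)` to which the Stone–Weierstrass
theorem is applied: the range of the evaluation of polynomials at the coordinate functions. -/
noncomputable def mvPolynomialFunctions (σ : Type*) : Subalgebra ℝ C(σ → ℝ, ℝ) :=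
  (aeval (ContinuousMap.eval (X := fun _ : σ => ℝ)) :
    MvPolynomial σ ℝ →ₐ[ℝ] C(σ → ℝ, ℝ)).range

theorem aeval_continuousMapEval_apply (P : MvPolynomial σ ℝ) (x : σ → ℝ) :
    (aeval (ContinuousMap.eval (X := fun _ : σ => ℝ)) P : C(σ → ℝ, ℝ)) x = eval x P := by
  induction P using MvPolynomial.induction_on with
  | C a => simp
  | add p q hp hq => simp [hp, hq]
  | mul_X p i hp => simp [hp]

theorem separatesPoints_mvPolynomialFunctions : (mvPolynomialFunctions σ).SeparatesPoints := by
  intro x y hxy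
  obtain ⟨i, hi⟩ := Function.ne_iff.mp hxy
  exact ⟨_, ⟨_, ⟨X i, rfl⟩, rfl⟩, by simpa using hi⟩

theorem exists_mvPolynomial_near_of_isCompact (hs : IsCompact s) (hf : Continuous f)
    (hε : 0 < ε) : ∃ P : MvPolynomial σ ℝ, ∀ x ∈ s, |eval x P - f x| < ε := by
  obtain ⟨_, ⟨P, rfl⟩, hP⟩ :=
    ContinuousMap.exists_mem_subalgebra_near_continuous_of_isCompact_of_separatesPoints
      separatesPoints_mvPolynomialFunctions ⟨f, hf⟩ hs hε
  exact ⟨P, fun x hx => by simpa [aeval_continuousMapEval_apply] using hP x hx⟩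

theorem exists_mvPolynomial_between_of_isCompact (hs : IsCompact s) (hf : Continuous f)
    (hε : 0 < ε) : ∃ P : MvPolynomial σ ℝ, ∀ x ∈ s, f x ≤ eval x P ∧ eval x P ≤ f x + ε := by
  obtain ⟨P, hP⟩ := exists_mvPolynomial_near_of_isCompact hs (hf.add_const (ε / 2)) (half_pos hε)
  refine ⟨P, fun x hx => ?_⟩
  obtain ⟨hlower, hupper⟩ := abs_lt.mp (hP x hx)
  constructor <;> linarith

variable [Countable σ] {μ : Measure (σ → ℝ)} [IsFiniteMeasureOnCompacts μ]

theorem integrableOn_eval_of_isCompact (hs : IsCompact s) (P : MvPolynomial σ ℝ) :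
    IntegrableOn (fun x => eval x P) s μ :=
  P.continuous_eval.continuousOn.integrableOn_compact hs

theorem exists_mvPolynomial_ge_setIntegral_lt (hs : MeasurableSet s) (ht : IsCompact t)
    (hst : s ⊆ t) (hf : Continuous f) (hε : 0 < ε) :
    ∃ P : MvPolynomial σ ℝ, (∀ x ∈ t, f x ≤ eval x P) ∧
      ∫ x in s, eval x P ∂μ < ∫ x in s, f x ∂μ + ε := by
  obtain ⟨δ, hδ, hδε⟩ := exists_pos_mul_lt hε (μ.real s)
  obtain ⟨P, hP⟩ := exists_mvPolynomial_between_of_isCompact ht hf hδ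
  refine ⟨P, fun x hx => (hP x hx).1, ?_⟩
  have hf_int : IntegrableOn f s μ := (hf.continuousOn.integrableOn_compact ht).mono_set hst
  have hδ_int : IntegrableOn (fun _ => δ) s μ :=
    integrableOn_const (measure_ne_top_of_subset hst ht.measure_ne_top)
  calc ∫ x in s, eval x P ∂μ
      ≤ ∫ x in s, (f x + δ) ∂μ :=
        setIntegral_mono_on ((integrableOn_eval_of_isCompact ht P).mono_set hst)
          (hf_int.add hδ_int) hs fun x hx => (hP x (hst hx)).2
    _ = ∫ x in s, f x ∂μ + μ.real s * δ := by
        rw [integral_add hf_int hδ_int, setIntegral_const, smul_eq_mul]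
    _ < ∫ x in s, f x ∂μ + ε := by gcongr

end PolynomialApproximation

theorem exists_continuous_ge_one_integral_lt {X : Type*} [MeasurableSpace X]
    [PseudoEMetricSpace X] [OpensMeasurableSpace X] (μ : Measure X) [IsFiniteMeasure μ]
    {F : Set X} (hF : IsClosed F) {a : ℝ} (ha : μ.real F < a) :
    ∃ f : X → ℝ, Continuous f ∧ (∀ x, 0 ≤ f x) ∧ (∀ x ∈ F, 1 ≤ f x) ∧ ∫ x, f x ∂μ < a := by
  have hlim := tendsto_integral_thickenedIndicator_of_isClosed μ hF
    (fun _ => Nat.one_div_pos_of_nat) tendsto_one_div_add_atTop_nhds_zero_nat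
  obtain ⟨k, hk⟩ := (hlim.eventually_lt_const ha).exists
  exact ⟨_, by fun_prop, fun x => NNReal.coe_nonneg _,
    fun x hx => by simp [thickenedIndicator_one _ F hx], hk⟩

section FeasiblePolynomials

variable {n : ℕ} {B K : Set (Fin n → ℝ)} {μ : Measure (Fin n → ℝ)}
  [IsFiniteMeasureOnCompacts μ]

theorem feasible_one (B K : Set (Fin n → ℝ)) (d : ℕ) : Feasible B K d 1 := by
  simp [Feasible]

theorem Feasible.measureReal_inter_le_setIntegral {d : ℕ} {P : MvPolynomial (Fin n) ℝ}
    (hP : Feasible B K d P) (hB : IsCompact B) : μ.real (K ∩ B) ≤ ∫ x in B, eval x P ∂μ := by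
  obtain ⟨-, hP_nonneg, hP_one⟩ := hP
  have hP_int : IntegrableOn (fun x => eval x P) B μ := integrableOn_eval_of_isCompact hB P
  calc μ.real (K ∩ B)
      ≤ μ.real ({x | 1 ≤ eval x P} ∩ B) :=
        measureReal_mono (Set.inter_subset_inter_left B hP_one)
          (measure_ne_top_of_subset Set.inter_subset_right hB.measure_ne_top)
    _ = 1 * (μ.restrict B).real {x | 1 ≤ eval x P} := by
        rw [one_mul, measureReal_restrict_apply' hB.measurableSet]
    _ ≤ ∫ x in B, eval x P ∂μ :=
        mul_meas_ge_le_integral_of_nonneg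
          (ae_restrict_of_forall_mem hB.measurableSet hP_nonneg) hP_int 1

theorem exists_feasible_setIntegral_lt (hB : IsCompact B) (hK : IsCompact K) {a : ℝ}
    (ha : μ.real (K ∩ B) < a) :
    ∃ P, Feasible B K P.totalDegree P ∧ ∫ x in B, eval x P ∂μ < a := by
  have : IsFiniteMeasure (μ.restrict B) := isFiniteMeasure_restrict.mpr hB.measure_ne_top
  rw [← measureReal_restrict_apply hK.measurableSet] at ha
  obtain ⟨f, hf, hf_nonneg, hf_one, hf_lt⟩ :=
    exists_continuous_ge_one_integral_lt (μ.restrict B) hK.isClosed ha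
  obtain ⟨P, hfP, hP_lt⟩ :=
    exists_mvPolynomial_ge_setIntegral_lt (μ := μ) hB.measurableSet (hB.union hK)
      Set.subset_union_left hf (sub_pos.mpr hf_lt)
  refine ⟨P, ⟨le_rfl, fun x hx => ?_, fun x hx => ?_⟩, by linarith⟩
  · exact (hf_nonneg x).trans (hfP x (.inl hx))
  · exact (hf_one x hx).trans (hfP x (.inr hx))

theorem stmt_15_general (hB : IsCompact B) (hK : IsCompact K) :
    Tendsto (fun d => sInf {v : ℝ | ∃ P : MvPolynomial (Fin n) ℝ,
      Feasible B K d P ∧ v = ∫ x in B, eval x P ∂μ}) atTop (nhds (μ.real (K ∩ B))) := by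
  have lower_bound (d : ℕ) : μ.real (K ∩ B) ∈ lowerBounds {v : ℝ |
      ∃ P : MvPolynomial (Fin n) ℝ, Feasible B K d P ∧ v = ∫ x in B, eval x P ∂μ} := by
    rintro _ ⟨P, hP, rfl⟩
    exact hP.measureReal_inter_le_setIntegral hB
  refine tendsto_order.mpr ⟨fun a ha => .of_forall fun d => ?_, fun a ha => ?_⟩
  · exact ha.trans_le (le_csInf ⟨_, 1, feasible_one B K d, rfl⟩ (lower_bound d))
  · obtain ⟨P, ⟨-, hP⟩, hPa⟩ := exists_feasible_setIntegral_lt hB hK ha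
    filter_upwards [eventually_ge_atTop P.totalDegree] with d hd
    exact (csInf_le ⟨_, lower_bound d⟩ ⟨P, ⟨hd, hP⟩, rfl⟩).trans_lt hPa

end FeasiblePolynomials

theorem stmt_15 {n : ℕ} (B K : Set (Fin n → ℝ)) (hB : IsCompact B) (hK : IsClosed K)
    (hKB : K ⊆ B)
    (V : ℕ → ℝ)
    (hV : ∀ d, V d = sInf {v : ℝ | ∃ P : MvPolynomial (Fin n) ℝ,
      Feasible B K d P ∧ v = ∫ x in B, eval x P}) :
    Tendsto V atTop (nhds (volume (K ∩ B)).toReal) := by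
  obtain rfl := funext hV
  exact stmt_15_general hB (hB.of_isClosed_subset hK hKB)
end
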